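/- Let T ∈ 𝓔^ω be orientation-preserving with T(π(0)) = π(0), and let 𝓓 be a dense subset of 𝓒^1 consisting of C^2 functions. Let f_0 ∈ 𝓒^2 be such that K(f_0,T) contains no periodic point of T, and set K̂ = π^{-1}(K(f_0,T)) ∩ [0,1] (so K̂ ⊂ (0,1)). Then there exist δ > 0, points x_1,…,x_Q ∈ K̂, and functions φ_{i,q} ∈ 𝓓 for i ∈ 𝔸 and 1 ≤ q ≤ Q, such that: (i) K̂ ⊆ ⋃_{q=1}^Q (x_q − δ, x_q + δ); and (ii) whenever |x − x_q| ≤ 2δ for some q, then for every i ∈ 𝔸 and every (finite or infinite) word j over 𝔸: |(h^{φ_{i,q}}_j)'(x) − 1| ≤ 1/3 if the first letter of j is i, and |(h^{φ_{i,q}}_j)'(x)| ≤ 1/3 if the first letter of j is not i. -/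

import Mathlib

/-!
**`K(f₀,T)` is non-empty.** Every orbit segment of length `n` is shadowed by a periodic orbit,
whose invariant measure competes in the supremum defining `β`; as `f₀` is Lipschitz and inverse
branches contract, this gives `S_n f₀ ≤ n β + const`. Conversely, above every point `x` some `z`
with `T^n z = x` has `S_n f₀ z ≥ n β - const`. Hence the functions
`u_k x = sup {S_n f₀ z - n β : n ≥ k, T^n z = x}` are uniformly bounded and equi-Lipschitz, and
their decreasing limit is a Lipschitz calibrated sub-action `g`. Calibration provides arbitrarily
long orbit segments inside `E_{f₀,T,g}`, so that `Λ_{f₀,T,g}` is non-empty by compactness.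

**`K(f₀,T)` is compact.** All Lipschitz calibrated sub-actions share one Lipschitz constant, so
those vanishing at `0` form a compact family. Over this family the pairs `(g, x)` with
`x ∈ Λ_{f₀,T,g}` form a closed set, whose projection to the circle is `K(f₀,T)`.

**The perturbations.** Fix `x₀` over `K(f₀,T)` and a letter `i`. Let `φ'` be `T'` times a cut-off
function `t` which is `1` near `τ_i x₀` and `0` outside a small neighbourhood, minus the small
constant which makes the mean vanish, and approximate `φ` in `C^1` by an element of `𝓓`. Since
`T'(τ_{j,n+1}) τ_{j,n+1}' = τ_{j,n}'`, the derivative `(h^φ_j)'` is close to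
`∑ t(τ_{j,n+1}) τ_{j,n}'`. The term `n = 0` is `1` or `0` according to whether the first letter
of `j` is `i`, and the terms with `n` large are geometrically small. The others vanish near `x₀`:
if `τ_{j,n+1} x₀` and `τ_i x₀` were equal on the circle, applying `T^(n+1)` would give
`x₀ = T^n x₀`, and by compactness in `x₀` and `j` these points are even uniformly separated. So
the size of the cut-off, and hence `δ`, does not depend on `x₀`, and finitely many `x_q` suffice.
-/

open MeasureTheory Topology Filter Set
open scoped UniformConvergence

noncomputable section

/-- The circle `ℝ/ℤ`. -/
abbrev Circle1 : Type := AddCircle (1 : ℝ)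

/-- The canonical representative in `[0,1)` of a point of `ℝ/ℤ`. -/
noncomputable def rep (z : Circle1) : ℝ := (AddCircle.equivIco 1 0 z : ℝ)

/-- The circle map induced by a lift `F : ℝ → ℝ`. -/
noncomputable def cmap (F : ℝ → ℝ) : Circle1 → Circle1 := fun z => ((F (rep z) : ℝ) : Circle1)

/-- The data determining the `C^r` topology: all derivatives of order `≤ r`, viewed in the
space of functions `ℝ → ℝ` with the uniform-convergence topology. -/
noncomputable def crSeq (r : ℕ∞) (f : ℝ → ℝ) : ℕ → (ℝ →ᵤ ℝ) :=
  fun k => UniformFun.ofFun (if (k : ℕ∞) ≤ r then iteratedDeriv k f else 0)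

/-- The space `𝓒^r` of `C^r` functions `ℝ/ℤ → ℝ`. -/
def CrFun (r : ℕ∞) : Type := {f : Circle1 → ℝ // ContDiff ℝ r fun x : ℝ => f ↑x}

/-- The `C^r` topology on `𝓒^r`. -/
noncomputable instance (r : ℕ∞) : TopologicalSpace (CrFun r) :=
  TopologicalSpace.induced (fun f : CrFun r => crSeq r fun x : ℝ => f.1 ↑x) inferInstance

/-- `F : ℝ → ℝ` is a lift of a `C^r` expanding circle map: it is `C^r`, sends `x+1` to
`F x + d` for a fixed integer `d`, and `|(Fⁿ)'| ≥ C λⁿ` for some `C > 0`, `λ > 1`. -/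
def ExpandingLift (r : ℕ∞) (F : ℝ → ℝ) : Prop :=
  ContDiff ℝ r F ∧ (∃ d : ℤ, ∀ x : ℝ, F (x + 1) = F x + d) ∧
    ∃ C > (0 : ℝ), ∃ l > (1 : ℝ), ∀ n : ℕ, 1 ≤ n → ∀ x : ℝ, C * l ^ n ≤ |deriv (F^[n]) x|

/-- The space `𝓔^r` of (lifts of) `C^r` expanding circle maps, with the `C^r` topology. -/
def ExpMap (r : ℕ∞) : Type := {F : ℝ → ℝ // ExpandingLift r F}

noncomputable instance (r : ℕ∞) : TopologicalSpace (ExpMap r) :=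
  TopologicalSpace.induced (fun F : ExpMap r => crSeq r F.1) inferInstance

/-- `μ` is a `T`-invariant Borel probability measure. -/
def InvProb (T : Circle1 → Circle1) (μ : Measure Circle1) : Prop :=
  IsProbabilityMeasure μ ∧ μ.map T = μ

/-- `β(f,T)`, the maximal ergodic average. -/
noncomputable def beta (f : Circle1 → ℝ) (T : Circle1 → Circle1) : ℝ :=
  sSup ((fun μ : Measure Circle1 => ∫ x, f x ∂μ) '' {μ | InvProb T μ})

/-- `μ` is a maximizing measure for `(f,T)`. -/
def IsMaximizing (f : Circle1 → ℝ) (T : Circle1 → Circle1) (μ : Measure Circle1) : Prop :=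
  InvProb T μ ∧ ∫ x, f x ∂μ = beta f T

/-- `μ` is a periodic measure: an invariant measure supported on a periodic orbit. -/
def IsPeriodicMeasure (T : Circle1 → Circle1) (μ : Measure Circle1) : Prop :=
  InvProb T μ ∧ ∃ x : Circle1, ∃ n : ℕ, 0 < n ∧ T^[n] x = x ∧
    μ (Set.range fun k : ℕ => T^[k] x) = 1

/-- `(f,T)` is uniquely maximized by a periodic measure. -/
def UniqMaxPeriodic (f : Circle1 → ℝ) (T : Circle1 → Circle1) : Prop :=
  ∃ μ : Measure Circle1, IsMaximizing f T μ ∧ IsPeriodicMeasure T μ ∧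
    ∀ ν : Measure Circle1, IsMaximizing f T ν → ν = μ

/-- A (continuous) sub-action for `(f,T)`. -/
def IsSubaction (f : Circle1 → ℝ) (T : Circle1 → Circle1) (g : Circle1 → ℝ) : Prop :=
  Continuous g ∧ ∀ x, g x + f x ≤ g (T x) + beta f T

/-- A calibrated sub-action for `(f,T)`. -/
def IsCalibrated (f : Circle1 → ℝ) (T : Circle1 → Circle1) (g : Circle1 → ℝ) : Prop :=
  IsSubaction f T g ∧ ∀ x, ∃ y, T y = x ∧ g y + f y = g x + beta f T

/-- `G_{f,T}`: the set of Lipschitz calibrated sub-actions of `(f,T)`. -/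
def Gset (f : Circle1 → ℝ) (T : Circle1 → Circle1) : Set (Circle1 → ℝ) :=
  {g | (∃ K : NNReal, LipschitzWith K g) ∧ IsCalibrated f T g}

/-- The set `E_{f,T,g}`. -/
def Eset (f : Circle1 → ℝ) (T : Circle1 → Circle1) (g : Circle1 → ℝ) : Set Circle1 :=
  {x | g x + f x = g (T x) + beta f T}

/-- The set `Λ*_{f,T,g}`. -/
def LambdaStar (f : Circle1 → ℝ) (T : Circle1 → Circle1) (g : Circle1 → ℝ) : Set Circle1 :=
  {x | ∀ n : ℕ, T^[n] x ∈ Eset f T g}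

/-- The set `Λ_{f,T,g}`. -/
def Lambda (f : Circle1 → ℝ) (T : Circle1 → Circle1) (g : Circle1 → ℝ) : Set Circle1 :=
  ⋂ n : ℕ, T^[n] '' LambdaStar f T g

/-- The set `K(f,T)`. -/
def Kset (f : Circle1 → ℝ) (T : Circle1 → Circle1) : Set Circle1 :=
  ⋃ g ∈ Gset f T, Lambda f T g

/-- The `(f,T)`-non-wandering set `Ω(f,T)`. -/
def OmegaSet (f : Circle1 → ℝ) (T : Circle1 → Circle1) : Set Circle1 :=
  {x | ∀ ε > (0 : ℝ), ∃ n : ℕ, 1 ≤ n ∧ ∃ z : Circle1, T^[n] z = x ∧ dist z x < ε ∧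
    |∑ i ∈ Finset.range n, (f (T^[i] z) - beta f T)| < ε}

/-- `A` is a periodic orbit of `T`. -/
def IsPeriodicOrbit (T : Circle1 → Circle1) (A : Set Circle1) : Prop :=
  ∃ x : Circle1, (∃ n : ℕ, 0 < n ∧ T^[n] x = x) ∧ A = Set.range fun k : ℕ => T^[k] x

/-- `A` is a `T`-minimal set: a nonempty compact invariant set with no proper nonempty
compact invariant subset. -/
def IsMinimalSet (T : Circle1 → Circle1) (A : Set Circle1) : Prop :=
  A.Nonempty ∧ IsCompact A ∧ T '' A ⊆ A ∧
    ∀ B ⊆ A, B.Nonempty → IsCompact B → T '' B ⊆ B → B = A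

/-- The space of `C^r` families of functions on the circle with `q` parameters,
i.e. maps `(t,x) ↦ f_t(x)` that are jointly `C^r` (the circle variable via a lift). -/
def FamFun (r : ℕ∞) (q : ℕ) : Type :=
  {G : ((Fin q → ℝ) × ℝ) → ℝ // ContDiff ℝ r G ∧ ∀ t x, G (t, x + 1) = G (t, x)}

noncomputable def famSeq (r : ℕ∞) (q : ℕ) (G : ((Fin q → ℝ) × ℝ) → ℝ) :
    (k : ℕ) → (((Fin q → ℝ) × ℝ) →ᵤ (((Fin q → ℝ) × ℝ) [×k]→L[ℝ] ℝ)) :=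
  fun k => UniformFun.ofFun (if (k : ℕ∞) ≤ r then iteratedFDeriv ℝ k G else 0)

/-- The `C^r` topology on the space of `C^r` families. -/
noncomputable instance (r : ℕ∞) (q : ℕ) : TopologicalSpace (FamFun r q) :=
  TopologicalSpace.induced (fun G : FamFun r q => famSeq r q G.1) inferInstance

/-- The member `f_t : ℝ/ℤ → ℝ` of a family, at the parameter `t`. -/
noncomputable def famMem {r : ℕ∞} {q : ℕ} (G : FamFun r q) (t : Fin q → ℝ) : Circle1 → ℝ :=
  fun z => G.1 (t, rep z)

/-- The product `m_∞` over `ℕ` of Lebesgue measure on `[0,1]`, realised as the pushforward of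
the Haar probability measure of the compact group `(ℝ/ℤ)^ℕ` under the coordinatewise choice of
representatives in `[0,1)`. -/
noncomputable def mInfty : Measure (ℕ → ℝ) :=
  Measure.map (fun (t : ℕ → Circle1) (n : ℕ) => rep (t n))
    (MeasureTheory.Measure.addHaarMeasure (⊤ : TopologicalSpace.PositiveCompacts (ℕ → Circle1)))

/-- `S` is an `N`-dimensionally shy subset of a normed real vector space `V`. -/
def NDimShy {V : Type*} [NormedAddCommGroup V] [NormedSpace ℝ V] (N : ℕ) (S : Set V) : Prop :=
  ∃ φ : Fin N → V, ∀ f : V,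
    volume {t : Fin N → ℝ | (∀ i, t i ∈ Set.Icc (0 : ℝ) 1) ∧ f + ∑ i, t i • φ i ∈ S} = 0

/-- `S` is a finite dimensionally shy subset of a normed real vector space `V`. -/
def FinDimShy {V : Type*} [NormedAddCommGroup V] [NormedSpace ℝ V] (S : Set V) : Prop :=
  ∃ N : ℕ, 0 < N ∧ NDimShy N S

/-- `S` is a shy subset of `V`: there are a compactly supported Borel probability measure `μ`
on `V` and a Borel set `S̃ ⊇ S` all of whose translates are `μ`-null. -/
def IsShy {V : Type*} [NormedAddCommGroup V] [NormedSpace ℝ V] (S : Set V) : Prop :=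
  letI : MeasurableSpace V := borel V
  ∃ μ : Measure V, μ Set.univ = 1 ∧ (∃ K : Set V, IsCompact K ∧ μ K = 1) ∧
    ∃ St : Set V, MeasurableSet St ∧ S ⊆ St ∧
      ∀ v : V, μ ((fun x => x + v) ⁻¹' St) = 0

/-- `S` is a prevalent subset of `V`. -/
def IsPrevalent {V : Type*} [NormedAddCommGroup V] [NormedSpace ℝ V] (S : Set V) : Prop :=
  IsShy Sᶜ

/-- `F` is the (normalized) lift of an orientation-preserving real analytic expanding circle
map of degree `d` fixing `π(0)`. -/
def AnalyticExpandingLift (F : ℝ → ℝ) (d : ℕ) : Prop :=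
  (∀ x : ℝ, AnalyticAt ℝ F x) ∧ (∀ x : ℝ, F (x + 1) = F x + d) ∧ StrictMono F ∧ F 0 = 0 ∧
    2 ≤ d ∧ ∃ C > (0 : ℝ), ∃ l > (1 : ℝ), ∀ n : ℕ, 1 ≤ n → ∀ x : ℝ, C * l ^ n ≤ |deriv (F^[n]) x|

/-- The inverse branches `τ_{i,n} = τ_{i_n} ∘ ⋯ ∘ τ_{i_1}`, where `τ = F⁻¹` and
`τ_i(x) = τ(x+i)`; the word `i` is indexed from `0`, so `i 0` is the first letter `i_1`. -/
noncomputable def tauIter (F : ℝ → ℝ) {d : ℕ} (i : ℕ → Fin d) : ℕ → ℝ → ℝ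
  | 0, x => x
  | n + 1, x => Function.invFun F (tauIter F i n x + ((i n : ℕ) : ℝ))

/-- The function `h^f_i` associated to an infinite word `i`. -/
noncomputable def hSum (F : ℝ → ℝ) {d : ℕ} (i : ℕ → Fin d) (f : Circle1 → ℝ) : ℝ → ℝ :=
  fun x => ∑' n : ℕ,
    (f ((tauIter F i (n + 1) x : ℝ) : Circle1) - f ((tauIter F i (n + 1) 0 : ℝ) : Circle1))

/-- The function `h^f_i` associated to a finite word of length `m` (the first `m` letters
of `i`). -/
noncomputable def hSumFin (F : ℝ → ℝ) {d : ℕ} (i : ℕ → Fin d) (m : ℕ) (f : Circle1 → ℝ) :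
    ℝ → ℝ :=
  fun x => ∑ n ∈ Finset.range m,
    (f ((tauIter F i (n + 1) x : ℝ) : Circle1) - f ((tauIter F i (n + 1) 0 : ℝ) : Circle1))

/-- `i ∈ CL(x,K)`: all backward images of `x` along the word `i` lie over `K`. -/
def WordIn (F : ℝ → ℝ) {d : ℕ} (i : ℕ → Fin d) (x : ℝ) (K : Set Circle1) : Prop :=
  ∀ n : ℕ, 1 ≤ n → ((tauIter F i n x : ℝ) : Circle1) ∈ K

/-- `x` (a real, lying over `K`) is an `f`-supercritical value of `K`. -/
def IsSupercriticalValue (F : ℝ → ℝ) (d : ℕ) (f : Circle1 → ℝ) (K : Set Circle1) (x : ℝ) :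
    Prop :=
  ((x : ℝ) : Circle1) ∈ K ∧ ∃ i j : ℕ → Fin d, WordIn F i x K ∧ WordIn F j x K ∧ i 0 ≠ j 0 ∧
    deriv (hSum F i f) x = deriv (hSum F j f) x

/-- `x` is a critical value of `T|K`. -/
def IsCriticalValue (T : Circle1 → Circle1) (K : Set Circle1) (x : Circle1) : Prop :=
  x ∈ K ∧ ∃ y z, y ∈ K ∧ z ∈ K ∧ y ≠ z ∧ T y = x ∧ T z = x

/-- A critical value `x` of `T|K` is regular: on each side of `x` there is a continuous
inverse branch of `T` selecting the unique preimage in `K`. -/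
def IsRegularCriticalValue (T : Circle1 → Circle1) (K : Set Circle1) (x : Circle1) : Prop :=
  ∃ U : Set Circle1, U ∈ 𝓝 x ∧ IsConnected U ∧
    ∀ b ∈ U \ {x}, ∃ s : Circle1 → Circle1,
      ContinuousOn s (connectedComponentIn (U \ {x}) b) ∧
      (∀ y ∈ connectedComponentIn (U \ {x}) b, T (s y) = y) ∧
      (∀ y ∈ K ∩ connectedComponentIn (U \ {x}) b, T ⁻¹' {y} ∩ K = {s y})

/-- `T|K` is Sturmian-like: every critical value is regular. -/
def SturmianLike (T : Circle1 → Circle1) (K : Set Circle1) : Prop :=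
  ∀ x, IsCriticalValue T K x → IsRegularCriticalValue T K x

/-- `f : ℝ/ℤ → ℝ` is a trigonometric polynomial. -/
def IsTrigPoly (f : Circle1 → ℝ) : Prop :=
  ∃ m : ℕ, ∃ a b : ℕ → ℝ, ∀ x : ℝ,
    f ↑x = a 0 + ∑ k ∈ Finset.range m,
      (a (k + 1) * Real.cos (2 * Real.pi * (k + 1) * x) +
        b (k + 1) * Real.sin (2 * Real.pi * (k + 1) * x))

end


open scoped NNReal

/-! ### Functions on the circle -/

namespace Circle1

theorem dist_coe_le (x y : ℝ) : dist (x : Circle1) y ≤ dist x y := by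
  rw [dist_eq_norm, ← AddCircle.coe_sub, UnitAddCircle.norm_eq, Real.dist_eq]
  simpa using round_le (x - y) 0

theorem exists_dist_coe_eq (x y : ℝ) : ∃ k : ℤ, dist (x : Circle1) y = dist x (y + k) := by
  refine ⟨round (x - y), ?_⟩
  rw [dist_eq_norm, ← AddCircle.coe_sub, UnitAddCircle.norm_eq, Real.dist_eq, sub_add_eq_sub_sub]

theorem dist_le_one (z w : Circle1) : dist z w ≤ 1 := by
  have h := AddCircle.norm_le_half_period (1 : ℝ) (x := z - w) one_ne_zero
  rw [← dist_eq_norm, abs_one] at h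
  linarith

theorem lipschitzWith_of_comp_coe {E : Type*} [PseudoMetricSpace E] {g : Circle1 → E} {L : ℝ≥0}
    (h : LipschitzWith L fun x : ℝ => g x) : LipschitzWith L g := by
  refine LipschitzWith.of_dist_le_mul fun z w => ?_
  induction z using QuotientAddGroup.induction_on with | H x => ?_
  induction w using QuotientAddGroup.induction_on with | H y => ?_
  obtain ⟨k, hk⟩ := exists_dist_coe_eq x y
  rw [hk]
  simpa using h.dist_le_mul x (y + k)

theorem continuous_of_comp_coe {E : Type*} [TopologicalSpace E] {g : Circle1 → E}
    (h : Continuous fun x : ℝ => g x) : Continuous g :=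
  (QuotientAddGroup.isQuotientMap_mk (AddSubgroup.zmultiples (1 : ℝ))).continuous_iff.2 h

end Circle1

theorem deriv_periodic_of_map_add {F : ℝ → ℝ} {c b : ℝ} (h : ∀ x, F (x + c) = F x + b) :
    Function.Periodic (deriv F) c := fun x => by
  rw [← deriv_comp_add_const, funext h, deriv_add_const]

theorem exists_abs_deriv_le_of_map_add_one {F : ℝ → ℝ} {b : ℝ} (hF : ContDiff ℝ 1 F)
    (h : ∀ x, F (x + 1) = F x + b) : ∃ M : ℝ≥0, ∀ x, |deriv F x| ≤ M := by
  obtain ⟨M, hM⟩ := ((deriv_periodic_of_map_add h).isBounded_of_continuous one_ne_zero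
    (hF.continuous_deriv le_rfl)).exists_norm_le
  refine ⟨M.toNNReal, fun x => ?_⟩
  exact (hM _ (mem_range_self x)).trans (Real.le_coe_toNNReal M)

theorem CrFun.exists_lipschitzWith {r : ℕ∞} (hr : 1 ≤ r) (f : CrFun r) :
    ∃ L, LipschitzWith L f.1 := by
  have hf : ContDiff ℝ 1 fun x : ℝ => f.1 x := f.2.of_le (by exact_mod_cast hr)
  obtain ⟨M, hM⟩ := exists_abs_deriv_le_of_map_add_one (b := 0) hf fun x => by simp
  exact ⟨M, Circle1.lipschitzWith_of_comp_coe <|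
    lipschitzWith_of_nnnorm_deriv_le (hf.differentiable one_ne_zero) hM⟩

/-! ### Birkhoff sums along shadowing orbits -/

/-- The constant `L K / (1 - r)` bounding the oscillation of the Birkhoff sums of an `L`-Lipschitz
function along orbits that approach each other like `K rⁿ` backwards in time. It is meant for
`r < 1`, where the truncated subtraction of `ℝ≥0` is harmless. -/
noncomputable def distortion (L K r : ℝ≥0) : ℝ≥0 := L * K / (1 - r)

theorem coe_distortion (L K : ℝ≥0) {r : ℝ≥0} (hr : r ≤ 1) :
    (distortion L K r : ℝ) = L * K / (1 - r) := by
  simp [distortion, NNReal.coe_sub hr]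

theorem dist_birkhoffSum_le_of_shadow {X E : Type*} [PseudoMetricSpace X] [NormedAddCommGroup E]
    {T : X → X} {f : X → E} {L K r : ℝ≥0} (hf : LipschitzWith L f) (hr : r < 1) {n : ℕ} {z w : X}
    {δ : ℝ} (hδ : 0 ≤ δ) (h : ∀ i ≤ n, dist (T^[i] z) (T^[i] w) ≤ K * r ^ (n - i) * δ) :
    dist (birkhoffSum T f n z) (birkhoffSum T f n w) ≤ distortion L K r * δ := by
  have hr' : (r : ℝ) < 1 := hr
  have hgeom : ∑ i ∈ Finset.range n, (r : ℝ) ^ (n - i) ≤ (1 - (r : ℝ))⁻¹ := by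
    calc ∑ i ∈ Finset.range n, (r : ℝ) ^ (n - i)
        ≤ ∑ i ∈ Finset.range n, (r : ℝ) ^ (n - 1 - i) :=
          Finset.sum_le_sum fun i _ => pow_le_pow_of_le_one r.2 hr'.le (by omega)
      _ = ∑ i ∈ Finset.Ico 0 n, (r : ℝ) ^ i := by
          rw [Finset.sum_range_reflect fun i => (r : ℝ) ^ i, Finset.range_eq_Ico]
      _ ≤ (1 - (r : ℝ))⁻¹ := by
          simpa using geom_sum_Ico_le_of_lt_one (m := 0) (n := n) r.2 hr'
  calc dist (birkhoffSum T f n z) (birkhoffSum T f n w)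
      ≤ ∑ i ∈ Finset.range n, dist (f (T^[i] z)) (f (T^[i] w)) :=
        dist_birkhoffSum_birkhoffSum_le T f n z w
    _ ≤ ∑ i ∈ Finset.range n, L * (K * r ^ (n - i) * δ) :=
        Finset.sum_le_sum fun i hi => (hf.dist_le_mul _ _).trans <|
          mul_le_mul_of_nonneg_left (h i (Finset.mem_range.1 hi).le) L.2
    _ = L * K * (∑ i ∈ Finset.range n, (r : ℝ) ^ (n - i)) * δ := by
        rw [Finset.mul_sum, Finset.sum_mul]
        exact Finset.sum_congr rfl fun i _ => by ring
    _ ≤ L * K * (1 - (r : ℝ))⁻¹ * δ := by gcongr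
    _ = distortion L K r * δ := by rw [coe_distortion L K hr.le, div_eq_mul_inv]

/-- Uniform backward contraction of a continuous map `T`: every orbit segment can be moved to a
prescribed endpoint `w` by a segment that approaches it like `K rⁿ` backwards in time. -/
structure BackwardContracting {X : Type*} [PseudoMetricSpace X] (T : X → X) (K r : ℝ≥0) :
    Prop where
  continuous : Continuous T
  lt_one : r < 1
  exists_shadow : ∀ (n : ℕ) (z w : X), ∃ z', T^[n] z' = w ∧
    ∀ i ≤ n, dist (T^[i] z) (T^[i] z') ≤ K * r ^ (n - i) * dist (T^[n] z) w

theorem BackwardContracting.exists_birkhoffSum_le {X : Type*} [PseudoMetricSpace X] {T : X → X}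
    {f : X → ℝ} {L K r : ℝ≥0} (hT : BackwardContracting T K r) (hf : LipschitzWith L f) (n : ℕ)
    (z w : X) : ∃ z', T^[n] z' = w ∧
      birkhoffSum T f n z ≤ birkhoffSum T f n z' + distortion L K r * dist (T^[n] z) w := by
  obtain ⟨z', hz', h⟩ := hT.exists_shadow n z w
  refine ⟨z', hz', ?_⟩
  have := (le_abs_self _).trans (dist_birkhoffSum_le_of_shadow hf hT.lt_one dist_nonneg h)
  linarith

theorem BackwardContracting.surjective {X : Type*} [PseudoMetricSpace X] {T : X → X}
    {K r : ℝ≥0} (hT : BackwardContracting T K r) : Function.Surjective T := fun x =>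
  let ⟨z, hz, _⟩ := hT.exists_shadow 1 x x
  ⟨z, hz⟩

/-! ### The maximal ergodic average -/

/-- The uniform probability measure on the first `n` points of the orbit of `p`; it is invariant
when `T^[n] p = p`. -/
noncomputable def orbitMeasure (T : Circle1 → Circle1) (n : ℕ) (p : Circle1) :
    Measure Circle1 :=
  (n : ENNReal)⁻¹ • ∑ i ∈ Finset.range n, Measure.dirac (T^[i] p)

theorem invProb_orbitMeasure {T : Circle1 → Circle1} (hT : Measurable T) {n : ℕ} (hn : n ≠ 0)
    {p : Circle1} (hp : T^[n] p = p) : InvProb T (orbitMeasure T n p) := by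
  refine ⟨⟨?_⟩, ?_⟩
  · simp only [orbitMeasure, Measure.smul_apply, Measure.finsetSum_apply, measure_univ,
      Finset.sum_const, Finset.card_range, smul_eq_mul, nsmul_eq_mul, mul_one]
    exact ENNReal.inv_mul_cancel (by exact_mod_cast hn) (ENNReal.natCast_ne_top n)
  · obtain ⟨m, rfl⟩ := Nat.exists_eq_succ_of_ne_zero hn
    rw [orbitMeasure, Measure.map_smul, ← Measure.mapₗ_apply_of_measurable hT, map_sum]
    simp_rw [Measure.mapₗ_apply_of_measurable hT, Measure.map_dirac' hT,
      ← Function.iterate_succ_apply' T]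
    rw [Finset.sum_range_succ, Finset.sum_range_succ' (fun i => Measure.dirac (T^[i] p)), hp,
      Function.iterate_zero_apply]

theorem integral_orbitMeasure (f : Circle1 → ℝ) (T : Circle1 → Circle1) (n : ℕ) (p : Circle1) :
    ∫ x, f x ∂orbitMeasure T n p = (n : ℝ)⁻¹ * birkhoffSum T f n p := by
  rw [orbitMeasure, integral_smul_measure,
    integral_finsetSum_measure fun i _ => integrable_dirac (by simp)]
  simp [birkhoffSum]

theorem integrable_of_continuous {f : Circle1 → ℝ} (hf : Continuous f) (μ : Measure Circle1)
    [IsFiniteMeasure μ] : Integrable f μ :=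
  hf.integrable_of_hasCompactSupport (HasCompactSupport.of_compactSpace f)

theorem bddAbove_integral_invProb {f : Circle1 → ℝ} (hf : Continuous f)
    (T : Circle1 → Circle1) :
    BddAbove ((fun μ : Measure Circle1 => ∫ x, f x ∂μ) '' {μ | InvProb T μ}) := by
  obtain ⟨B, hB⟩ := (isCompact_range hf).bddAbove
  refine ⟨B, ?_⟩
  rintro _ ⟨μ, ⟨hμ, -⟩, rfl⟩
  simpa using integral_mono (μ := μ) (integrable_of_continuous hf μ) (integrable_const B)
    fun z => hB (mem_range_self z)

theorem birkhoffSum_le_mul_beta {f : Circle1 → ℝ} (hf : Continuous f) {T : Circle1 → Circle1}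
    (hT : Measurable T) {n : ℕ} (hn : n ≠ 0) {p : Circle1} (hp : T^[n] p = p) :
    birkhoffSum T f n p ≤ n * beta f T := by
  have h : ∫ x, f x ∂orbitMeasure T n p ≤ beta f T :=
    le_csSup (bddAbove_integral_invProb hf T) ⟨_, invProb_orbitMeasure hT hn hp, rfl⟩
  rwa [integral_orbitMeasure, inv_mul_le_iff₀ (by positivity)] at h

theorem integral_birkhoffSum {f : Circle1 → ℝ} (hf : Continuous f) {T : Circle1 → Circle1}
    (hT : Continuous T) {μ : Measure Circle1} (hμ : InvProb T μ) (n : ℕ) :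
    ∫ x, birkhoffSum T f n x ∂μ = n * ∫ x, f x ∂μ := by
  have := hμ.1
  have hmp : MeasurePreserving T μ μ := ⟨hT.measurable, hμ.2⟩
  have hinv (i : ℕ) : ∫ x, f (T^[i] x) ∂μ = ∫ x, f x ∂μ := by
    conv_rhs => rw [← (hmp.iterate i).map_eq]
    rw [integral_map (hT.iterate i).measurable.aemeasurable hf.aestronglyMeasurable]
  have hint (i : ℕ) : Integrable (fun x => f (T^[i] x)) μ :=
    integrable_of_continuous (hf.comp (hT.iterate i)) μ
  simp only [birkhoffSum]
  rw [integral_finsetSum _ fun i _ => hint i]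
  simp [hinv]

theorem continuous_birkhoffSum {X : Type*} [TopologicalSpace X] {T : X → X} {f : X → ℝ}
    (hf : Continuous f) (hT : Continuous T) (n : ℕ) : Continuous (birkhoffSum T f n) :=
  continuous_finsetSum _ fun i _ => hf.comp (hT.iterate i)

theorem exists_mul_beta_le_birkhoffSum {f : Circle1 → ℝ} (hf : Continuous f)
    {T : Circle1 → Circle1} (hT : Continuous T) (hinv : ∃ μ, InvProb T μ) (n : ℕ) :
    ∃ z, n * beta f T ≤ birkhoffSum T f n z := by
  have hS := continuous_birkhoffSum hf hT n
  obtain ⟨p, -, hp⟩ := isCompact_univ.exists_isMaxOn ⟨(0 : Circle1), mem_univ _⟩ hS.continuousOn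
  refine ⟨p, ?_⟩
  rcases n.eq_zero_or_pos with rfl | hn
  · simp
  suffices beta f T ≤ birkhoffSum T f n p / n by
    rwa [le_div_iff₀' (by exact_mod_cast hn)] at this
  refine csSup_le (Set.Nonempty.image _ hinv) ?_
  rintro _ ⟨μ, hμ, rfl⟩
  have := hμ.1
  have hle := integral_mono (integrable_of_continuous hS μ) (integrable_const _)
    fun z => hp (mem_univ z)
  rw [integral_birkhoffSum hf hT hμ] at hle
  rw [le_div_iff₀' (by exact_mod_cast hn)]
  simpa using hle

/-- The Birkhoff sums of `f` of length `n` exceed `n β(f,T)` by at most `C`, and over every point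
there is one that falls short of `n β(f,T)` by at most `C`. -/
structure HasBirkhoffBounds (f : Circle1 → ℝ) (T : Circle1 → Circle1) (C : ℝ) : Prop where
  birkhoffSum_le : ∀ n z, birkhoffSum T f n z ≤ n * beta f T + C
  exists_le_birkhoffSum : ∀ n x, ∃ z, T^[n] z = x ∧ n * beta f T ≤ birkhoffSum T f n z + C

/-! ### Existence of a Lipschitz calibrated sub-action -/

section Calibrated

variable {T : Circle1 → Circle1} {K r L : ℝ≥0} {f : Circle1 → ℝ} {C : ℝ}

/-- The normalised Birkhoff sums of length at least `k` along orbit segments ending at `x`. -/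
def tailValues (f : Circle1 → ℝ) (T : Circle1 → Circle1) (k : ℕ) (x : Circle1) : Set ℝ :=
  {s | ∃ n z, k ≤ n ∧ T^[n] z = x ∧ birkhoffSum T f n z - n * beta f T = s}

/-- The supremum of `tailValues`; as `k → ∞` it decreases to a calibrated sub-action. -/
noncomputable def tailSup (f : Circle1 → ℝ) (T : Circle1 → Circle1) (k : ℕ) (x : Circle1) : ℝ :=
  sSup (tailValues f T k x)

theorem HasBirkhoffBounds.bddAbove_tailValues (hB : HasBirkhoffBounds f T C) (k : ℕ)
    (x : Circle1) : BddAbove (tailValues f T k x) := by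
  refine ⟨C, ?_⟩
  rintro _ ⟨n, z, -, -, rfl⟩
  linarith [hB.birkhoffSum_le n z]

theorem HasBirkhoffBounds.exists_mem_tailValues (hB : HasBirkhoffBounds f T C) (k : ℕ)
    (x : Circle1) : ∃ s ∈ tailValues f T k x, -C ≤ s := by
  obtain ⟨z, hz, h⟩ := hB.exists_le_birkhoffSum k x
  exact ⟨_, ⟨k, z, le_rfl, hz, rfl⟩, by linarith⟩

theorem HasBirkhoffBounds.neg_le_tailSup (hB : HasBirkhoffBounds f T C) (k : ℕ) (x : Circle1) :
    -C ≤ tailSup f T k x :=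
  let ⟨_, hs, h⟩ := hB.exists_mem_tailValues k x
  h.trans (le_csSup (hB.bddAbove_tailValues k x) hs)

theorem HasBirkhoffBounds.tailSup_antitone (hB : HasBirkhoffBounds f T C) (x : Circle1) :
    Antitone fun k => tailSup f T k x := fun k l hkl =>
  csSup_le_csSup (hB.bddAbove_tailValues k x) ((hB.exists_mem_tailValues l x).imp fun _ h => h.1)
    fun _ ⟨n, z, hn, hz, hs⟩ => ⟨n, z, hkl.trans hn, hz, hs⟩

theorem HasBirkhoffBounds.lipschitzWith_tailSup (hB : HasBirkhoffBounds f T C)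
    (hT : BackwardContracting T K r) (hf : LipschitzWith L f) (k : ℕ) :
    LipschitzWith (distortion L K r) (tailSup f T k) := by
  refine LipschitzWith.of_le_add_mul _ fun x y => ?_
  refine csSup_le ((hB.exists_mem_tailValues k x).imp fun _ h => h.1) ?_
  rintro _ ⟨n, z, hn, rfl, rfl⟩
  obtain ⟨z', hz', h⟩ := hT.exists_birkhoffSum_le hf n z y
  have := le_csSup (hB.bddAbove_tailValues k y) ⟨n, z', hn, hz', rfl⟩
  rw [tailSup]
  linarith

theorem HasBirkhoffBounds.tailSup_add_le (hB : HasBirkhoffBounds f T C) (k : ℕ) (y : Circle1) :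
    tailSup f T k y + f y ≤ tailSup f T (k + 1) (T y) + beta f T := by
  suffices tailSup f T k y ≤ tailSup f T (k + 1) (T y) + beta f T - f y by linarith
  refine csSup_le ((hB.exists_mem_tailValues k y).imp fun _ h => h.1) ?_
  rintro _ ⟨n, z, hn, rfl, rfl⟩
  have := le_csSup (hB.bddAbove_tailValues (k + 1) (T (T^[n] z)))
    ⟨n + 1, z, Nat.succ_le_succ hn, Function.iterate_succ_apply' T n z, rfl⟩
  rw [birkhoffSum_succ, Nat.cast_succ] at this
  rw [tailSup]
  linarith

theorem HasBirkhoffBounds.exists_tailSup_succ_le (hB : HasBirkhoffBounds f T C)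
    (hT : BackwardContracting T K r) (hf : LipschitzWith L f) (k : ℕ) (x : Circle1) :
    ∃ y, T y = x ∧ tailSup f T (k + 1) x + beta f T ≤ tailSup f T k y + f y := by
  have hcont : Continuous fun y => tailSup f T k y + f y :=
    (hB.lipschitzWith_tailSup hT hf k).continuous.add hf.continuous
  have hfiber : IsCompact (T ⁻¹' {x}) := (isClosed_singleton.preimage hT.continuous).isCompact
  obtain ⟨y, hy, hmax⟩ := hfiber.exists_isMaxOn (hT.surjective x) hcont.continuousOn
  refine ⟨y, hy, ?_⟩
  suffices tailSup f T (k + 1) x ≤ tailSup f T k y + f y - beta f T by linarith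
  refine csSup_le ((hB.exists_mem_tailValues (k + 1) x).imp fun _ h => h.1) ?_
  rintro _ ⟨_ | n, z, hn, hz, rfl⟩
  · omega
  rw [Function.iterate_succ_apply'] at hz
  have hle := le_csSup (hB.bddAbove_tailValues k (T^[n] z)) ⟨n, z, by omega, rfl, rfl⟩
  have hmax' : tailSup f T k (T^[n] z) + f (T^[n] z) ≤ tailSup f T k y + f y := hmax hz
  rw [← tailSup] at hle
  rw [birkhoffSum_succ, Nat.cast_succ]
  linarith

/-- The limit of the decreasing sequence `tailSup f T k` as `k → ∞`. -/
noncomputable def tailLim (f : Circle1 → ℝ) (T : Circle1 → Circle1) (x : Circle1) : ℝ :=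
  ⨅ k, tailSup f T k x

theorem HasBirkhoffBounds.bddBelow_range_tailSup (hB : HasBirkhoffBounds f T C) (x : Circle1) :
    BddBelow (range fun k => tailSup f T k x) :=
  ⟨-C, forall_mem_range.2 fun k => hB.neg_le_tailSup k x⟩

theorem HasBirkhoffBounds.tailLim_le (hB : HasBirkhoffBounds f T C) (k : ℕ) (x : Circle1) :
    tailLim f T x ≤ tailSup f T k x :=
  ciInf_le (hB.bddBelow_range_tailSup x) k

theorem HasBirkhoffBounds.lipschitzWith_tailLim (hB : HasBirkhoffBounds f T C)
    (hT : BackwardContracting T K r) (hf : LipschitzWith L f) :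
    LipschitzWith (distortion L K r) (tailLim f T) := by
  refine LipschitzWith.of_le_add_mul _ fun x y => ?_
  rw [← sub_le_iff_le_add]
  refine le_ciInf fun k => sub_le_iff_le_add.2 <| (hB.tailLim_le k x).trans ?_
  linarith [(abs_le.1 ((hB.lipschitzWith_tailSup hT hf k).dist_le_mul x y)).2]

theorem HasBirkhoffBounds.tailLim_add_le (hB : HasBirkhoffBounds f T C) (x : Circle1) :
    tailLim f T x + f x ≤ tailLim f T (T x) + beta f T := by
  have hlim : Tendsto (fun k => tailSup f T (k + 1) (T x)) atTop (𝓝 (tailLim f T (T x))) :=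
    (tendsto_atTop_ciInf (hB.tailSup_antitone _) (hB.bddBelow_range_tailSup _)).comp
      (tendsto_add_atTop_nat 1)
  refine ge_of_tendsto' (hlim.add_const _) fun k => ?_
  linarith [hB.tailLim_le k x, hB.tailSup_add_le k x]

theorem HasBirkhoffBounds.exists_tailLim_le (hB : HasBirkhoffBounds f T C)
    (hT : BackwardContracting T K r) (hf : LipschitzWith L f) (x : Circle1) :
    ∃ y, T y = x ∧ tailLim f T x + beta f T ≤ tailLim f T y + f y := by
  have hclosed k : IsClosed {y | T y = x ∧ tailLim f T x + beta f T ≤ tailSup f T k y + f y} :=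
    (isClosed_eq hT.continuous continuous_const).inter <| isClosed_le continuous_const <|
      (hB.lipschitzWith_tailSup hT hf k).continuous.add hf.continuous
  obtain ⟨y, hy⟩ := IsCompact.nonempty_iInter_of_sequence_nonempty_isCompact_isClosed
    (fun k => {y | T y = x ∧ tailLim f T x + beta f T ≤ tailSup f T k y + f y})
    (fun k y ⟨hy, h⟩ => ⟨hy, by linarith [hB.tailSup_antitone y k.le_succ]⟩)
    (fun k => (hB.exists_tailSup_succ_le hT hf k x).imp fun y ⟨hy, h⟩ =>
      ⟨hy, by linarith [h, hB.tailLim_le (k + 1) x]⟩)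
    (hclosed 0).isCompact hclosed
  rw [mem_iInter] at hy
  refine ⟨y, (hy 0).1, ?_⟩
  rw [← sub_le_iff_le_add]
  exact le_ciInf fun k => sub_le_iff_le_add.2 (hy k).2

theorem HasBirkhoffBounds.tailLim_mem_Gset (hB : HasBirkhoffBounds f T C)
    (hT : BackwardContracting T K r) (hf : LipschitzWith L f) : tailLim f T ∈ Gset f T := by
  have hlip := hB.lipschitzWith_tailLim hT hf
  refine ⟨⟨_, hlip⟩, ⟨hlip.continuous, hB.tailLim_add_le⟩, fun x => ?_⟩
  obtain ⟨y, rfl, h⟩ := hB.exists_tailLim_le hT hf x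
  exact ⟨y, rfl, (hB.tailLim_add_le y).antisymm h⟩

end Calibrated

/-! ### Compactness and non-emptiness of `K(f,T)` -/

section Kset

variable {T : Circle1 → Circle1} {f g : Circle1 → ℝ}

theorem IsSubaction.add_birkhoffSum_le (hg : IsSubaction f T g) (n : ℕ) (z : Circle1) :
    g z + birkhoffSum T f n z ≤ g (T^[n] z) + n * beta f T := by
  induction n with
  | zero => simp
  | succ n ih =>
    rw [birkhoffSum_succ, Function.iterate_succ_apply', Nat.cast_succ]
    linarith [hg.2 (T^[n] z)]

theorem add_birkhoffSum_eq_of_mem_Eset {n : ℕ} {z : Circle1}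
    (hz : ∀ i < n, T^[i] z ∈ Eset f T g) :
    g z + birkhoffSum T f n z = g (T^[n] z) + n * beta f T := by
  induction n with
  | zero => simp
  | succ n ih =>
    have hn : g (T^[n] z) + f (T^[n] z) = g (T (T^[n] z)) + beta f T := hz n n.lt_succ_self
    rw [birkhoffSum_succ, Function.iterate_succ_apply', Nat.cast_succ]
    linarith [ih fun i hi => hz i (hi.trans n.lt_succ_self)]

theorem IsCalibrated.exists_iterate_mem_Eset (hg : IsCalibrated f T g) (n : ℕ) (x : Circle1) :
    ∃ z, T^[n] z = x ∧ ∀ i < n, T^[i] z ∈ Eset f T g := by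
  induction n generalizing x with
  | zero => exact ⟨x, rfl, fun i hi => absurd hi i.not_lt_zero⟩
  | succ n ih =>
    obtain ⟨y, rfl, hE⟩ := hg.2 x
    obtain ⟨z, rfl, hz⟩ := ih y
    refine ⟨z, Function.iterate_succ_apply' T n z, fun i hi => ?_⟩
    rcases Nat.lt_succ_iff_lt_or_eq.1 hi with hi | rfl
    exacts [hz i hi, hE]

theorem isClosed_Eset (hT : Continuous T) (hf : Continuous f) (hg : Continuous g) :
    IsClosed (Eset f T g) :=
  isClosed_eq (hg.add hf) ((hg.comp hT).add continuous_const)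

theorem LambdaStar_eq_iInter (f : Circle1 → ℝ) (T : Circle1 → Circle1) (g : Circle1 → ℝ) :
    LambdaStar f T g = ⋂ n, T^[n] ⁻¹' Eset f T g := by
  ext x
  simp [LambdaStar]

theorem isClosed_LambdaStar (hT : Continuous T) (hf : Continuous f) (hg : Continuous g) :
    IsClosed (LambdaStar f T g) := by
  rw [LambdaStar_eq_iInter]
  exact isClosed_iInter fun n => (isClosed_Eset hT hf hg).preimage (hT.iterate n)

theorem mapsTo_LambdaStar (f : Circle1 → ℝ) (T : Circle1 → Circle1) (g : Circle1 → ℝ) :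
    MapsTo T (LambdaStar f T g) (LambdaStar f T g) := fun _ hx n => hx (n + 1)

theorem IsCalibrated.nonempty_LambdaStar (hg : IsCalibrated f T g) (hT : Continuous T)
    (hf : Continuous f) : (LambdaStar f T g).Nonempty := by
  have hclosed n : IsClosed (⋂ i, ⋂ _ : i < n, T^[i] ⁻¹' Eset f T g) :=
    isClosed_biInter fun i _ => (isClosed_Eset hT hf hg.1.1).preimage (hT.iterate i)
  obtain ⟨x, hx⟩ := IsCompact.nonempty_iInter_of_sequence_nonempty_isCompact_isClosed
    (fun n => ⋂ i, ⋂ _ : i < n, T^[i] ⁻¹' Eset f T g)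
    (fun n => biInter_subset_biInter_left fun i (hi : i < n) => hi.trans n.lt_succ_self)
    (fun n => (hg.exists_iterate_mem_Eset n 0).imp fun z hz => mem_iInter₂.2 hz.2)
    (hclosed 0).isCompact hclosed
  exact ⟨x, fun n => mem_iInter₂.1 (mem_iInter.1 hx (n + 1)) n n.lt_succ_self⟩

theorem IsCalibrated.nonempty_Lambda (hg : IsCalibrated f T g) (hT : Continuous T)
    (hf : Continuous f) : (Lambda f T g).Nonempty := by
  have himage n : IsCompact (T^[n] '' LambdaStar f T g) :=
    (isClosed_LambdaStar hT hf hg.1.1).isCompact.image (hT.iterate n)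
  refine IsCompact.nonempty_iInter_of_sequence_nonempty_isCompact_isClosed _ (fun n => ?_)
    (fun n => (hg.nonempty_LambdaStar hT hf).image _) (himage 0) fun n => (himage n).isClosed
  rw [Function.iterate_succ, image_comp]
  exact image_mono (mapsTo_LambdaStar f T g).image_subset

theorem HasBirkhoffBounds.nonempty_Kset {K r L : ℝ≥0} {C : ℝ} (hB : HasBirkhoffBounds f T C)
    (hT : BackwardContracting T K r) (hf : LipschitzWith L f) : (Kset f T).Nonempty := by
  have hg := hB.tailLim_mem_Gset hT hf
  obtain ⟨x, hx⟩ := hg.2.nonempty_Lambda hT.continuous hf.continuous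
  exact ⟨x, mem_iUnion₂.2 ⟨_, hg, hx⟩⟩

theorem lipschitzWith_of_mem_Gset {K r L : ℝ≥0} (hT : BackwardContracting T K r)
    (hf : LipschitzWith L f) (hg : g ∈ Gset f T) : LipschitzWith (distortion L K r) g := by
  obtain ⟨⟨A, hA⟩, hcal⟩ := hg
  refine LipschitzWith.of_le_add_mul _ fun x y => ?_
  have hlim : Tendsto (fun n : ℕ => g y + distortion L K r * dist x y +
      A * (K * r ^ n * dist x y)) atTop
      (𝓝 (g y + distortion L K r * dist x y + A * (K * 0 * dist x y))) :=
    ((((tendsto_pow_atTop_nhds_zero_of_lt_one r.2 hT.lt_one).const_mul _).mul_const _).const_mul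
      _).const_add _
  rw [mul_zero, zero_mul, mul_zero, add_zero] at hlim
  refine ge_of_tendsto' hlim fun n => ?_
  obtain ⟨z, rfl, hz⟩ := hcal.exists_iterate_mem_Eset n x
  obtain ⟨z', rfl, hclose⟩ := hT.exists_shadow n z y
  have hsum := (abs_le.1 (dist_birkhoffSum_le_of_shadow hf hT.lt_one dist_nonneg hclose)).2
  have hstart : dist z z' ≤ K * r ^ n * dist (T^[n] z) (T^[n] z') := hclose 0 n.zero_le
  have hAz := (abs_le.1 (hA.dist_le_mul z z')).2
  linarith [add_birkhoffSum_eq_of_mem_Eset hz, hcal.1.add_birkhoffSum_le n z',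
    mul_le_mul_of_nonneg_left hstart A.coe_nonneg]

theorem Lambda_sub_const (f : Circle1 → ℝ) (T : Circle1 → Circle1) (g : Circle1 → ℝ) (c : ℝ) :
    Lambda f T (fun x => g x - c) = Lambda f T g := by
  have hE : Eset f T (fun x => g x - c) = Eset f T g := by
    ext x
    simp only [Eset, mem_ofPred_eq]
    constructor <;> intro h <;> linarith
  simp only [Lambda, LambdaStar, hE]

theorem IsCalibrated.sub_const (hg : IsCalibrated f T g) (c : ℝ) :
    IsCalibrated f T fun x => g x - c := by
  refine ⟨⟨hg.1.1.sub continuous_const, fun x => ?_⟩, fun x => (hg.2 x).imp fun y hy => ⟨hy.1, ?_⟩⟩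
  · linarith [hg.1.2 x]
  · linarith [hy.2]

theorem isCalibrated_iff (hg : Continuous g) : IsCalibrated f T g ↔
    (∀ x, g x + f x ≤ g (T x) + beta f T) ∧ ∀ x, ∃ y ∈ Eset f T g, T y = x := by
  refine and_congr (and_iff_right hg) (forall_congr' fun x => exists_congr fun y => ?_)
  rw [and_comm]
  refine and_congr_left fun hy => ?_
  rw [← hy]
  rfl

/-- The `W`-Lipschitz functions vanishing at `0`, with the topology of pointwise convergence. -/
abbrev NormalizedLipschitz (W : ℝ≥0) : Type :=
  {g : Circle1 → ℝ // LipschitzWith W g ∧ g 0 = 0}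

namespace NormalizedLipschitz

variable {W : ℝ≥0}

instance : CompactSpace (NormalizedLipschitz W) := by
  refine isCompact_iff_compactSpace.1 ?_
  refine (isCompact_univ_pi fun _ : Circle1 => isCompact_closedBall (0 : ℝ) W).of_isClosed_subset
    ((isClosed_setOfPred_lipschitzWith W).inter
      (isClosed_eq (continuous_apply 0) continuous_const)) ?_
  rintro g ⟨hg, hg0⟩ x -
  rw [Metric.mem_closedBall, ← hg0]
  exact (hg.dist_le_mul x 0).trans (mul_le_of_le_one_right W.2 (Circle1.dist_le_one x 0))

theorem continuous_eval : Continuous fun p : NormalizedLipschitz W × Circle1 => p.1.1 p.2 :=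
  continuous_prod_of_continuous_lipschitzWith' _ W (fun g => g.2.1) fun x =>
    (continuous_apply x).comp continuous_subtype_val

theorem isClosed_setOfPred_mem_Eset (hT : Continuous T) (hf : Continuous f) :
    IsClosed {p : NormalizedLipschitz W × Circle1 | p.2 ∈ Eset f T p.1.1} :=
  isClosed_eq (continuous_eval.add (hf.comp continuous_snd))
    ((continuous_eval.comp (continuous_id.prodMap hT)).add continuous_const)

theorem isClosed_setOfPred_isCalibrated (hT : Continuous T) (hf : Continuous f) :
    IsClosed {g : NormalizedLipschitz W | IsCalibrated f T g.1} := by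
  have heval (x : Circle1) : Continuous fun g : NormalizedLipschitz W => g.1 x :=
    continuous_eval.comp (continuous_id.prodMk continuous_const)
  have hfiber (x : Circle1) : IsClosed
      (Prod.fst '' ({p : NormalizedLipschitz W × Circle1 | p.2 ∈ Eset f T p.1.1} ∩
        {p | T p.2 = x})) :=
    isClosedMap_fst_of_compactSpace _ <| (isClosed_setOfPred_mem_Eset hT hf).inter <|
      isClosed_eq (hT.comp continuous_snd) continuous_const
  convert (isClosed_iInter fun x => isClosed_le ((heval x).add_const (f x))
    ((heval (T x)).add_const (beta f T))).inter (isClosed_iInter hfiber) using 1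
  ext g
  simp [isCalibrated_iff g.2.1.continuous]

theorem isClosed_setOfPred_mem_Lambda (hT : Continuous T) (hf : Continuous f) :
    IsClosed {p : NormalizedLipschitz W × Circle1 | p.2 ∈ Lambda f T p.1.1} := by
  have hstar : IsClosed {p : NormalizedLipschitz W × Circle1 | p.2 ∈ LambdaStar f T p.1.1} := by
    convert isClosed_iInter fun n => (isClosed_setOfPred_mem_Eset (W := W) hT hf).preimage
      (continuous_id.prodMap (hT.iterate n)) using 1
    ext p
    simp [LambdaStar]
  have himage (n : ℕ) : IsClosed (Prod.map id T^[n] ''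
      {p : NormalizedLipschitz W × Circle1 | p.2 ∈ LambdaStar f T p.1.1}) :=
    (hstar.isCompact.image (continuous_id.prodMap (hT.iterate n))).isClosed
  convert isClosed_iInter himage using 1
  ext ⟨g, x⟩
  simp [Lambda, -Subtype.exists]

end NormalizedLipschitz

theorem Kset_eq_image {W : ℝ≥0} (hW : ∀ g ∈ Gset f T, LipschitzWith W g) :
    Kset f T = Prod.snd '' ({p : NormalizedLipschitz W × Circle1 | IsCalibrated f T p.1.1} ∩
      {p | p.2 ∈ Lambda f T p.1.1}) := by
  ext x
  constructor
  · intro hx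
    obtain ⟨g, hg, hx⟩ := mem_iUnion₂.1 hx
    refine ⟨(⟨fun y => g y - g 0, ?_, sub_self _⟩, x), ⟨hg.2.sub_const _, ?_⟩, rfl⟩
    · simpa using (hW g hg).sub (LipschitzWith.const (g 0))
    · rwa [mem_ofPred_eq, Lambda_sub_const]
  · rintro ⟨⟨g, x⟩, ⟨hcal, hx⟩, rfl⟩
    exact mem_iUnion₂.2 ⟨g.1, ⟨⟨W, g.2.1⟩, hcal⟩, hx⟩

theorem isCompact_Kset {K r L : ℝ≥0} (hT : BackwardContracting T K r) (hf : LipschitzWith L f) :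
    IsCompact (Kset f T) := by
  rw [Kset_eq_image fun g hg => lipschitzWith_of_mem_Gset hT hf hg]
  refine IsClosed.isCompact <| isClosedMap_snd_of_compactSpace _ ?_
  exact ((NormalizedLipschitz.isClosed_setOfPred_isCalibrated hT.continuous hf.continuous).preimage
    continuous_fst).inter
      (NormalizedLipschitz.isClosed_setOfPred_mem_Lambda hT.continuous hf.continuous)

end Kset

/-! ### Expanding lifts -/

/-- A `C¹` orientation-preserving lift `F` of a circle map of degree `d`, whose inverse branches
of order `n` contract by the factor `K rⁿ`. -/
structure ContractingLift (F : ℝ → ℝ) (d : ℕ) (K r : ℝ≥0) : Prop where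
  contDiff : ContDiff ℝ 1 F
  map_add_one : ∀ x, F (x + 1) = F x + d
  deriv_pos : ∀ x, 0 < deriv F x
  lt_one : r < 1
  antilipschitzWith_iterate : ∀ n, AntilipschitzWith (K * r ^ n) F^[n]

theorem antilipschitzWith_of_le_deriv {F : ℝ → ℝ} {c : ℝ≥0} (hc : c ≠ 0)
    (hF : Differentiable ℝ F) (hderiv : ∀ x, c ≤ deriv F x) : AntilipschitzWith c⁻¹ F := by
  have hc0 : (0 : ℝ) < c := NNReal.coe_pos.2 (pos_iff_ne_zero.2 hc)
  refine AntilipschitzWith.of_le_mul_dist fun x y => ?_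
  wlog hxy : y ≤ x generalizing x y
  · rw [dist_comm x, dist_comm (F x)]
    exact this y x (le_of_not_ge hxy)
  have h := mul_sub_le_image_sub_of_le_deriv hF hderiv hxy
  rw [NNReal.coe_inv, inv_mul_eq_div, le_div_iff₀' hc0, Real.dist_eq, Real.dist_eq,
    abs_of_nonneg (sub_nonneg.2 hxy)]
  exact h.trans (le_abs_self _)

theorem ExpandingLift.exists_contractingLift {F : ℝ → ℝ} {d : ℕ} (hF : ExpandingLift 1 F)
    (hmono : Monotone F) (hdeg : ∀ x, F (x + 1) = F x + d) : ∃ K r, ContractingLift F d K r := by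
  obtain ⟨hsmooth, -, C, hC, l, hl, hexp⟩ := hF
  have hdiff : Differentiable ℝ F := hsmooth.differentiable one_ne_zero
  lift C to ℝ≥0 using hC.le
  lift l to ℝ≥0 using zero_le_one.trans hl.le
  have hC0 : 0 < C := hC
  have hl1 : 1 < l := hl
  have hderiv (n : ℕ) (x : ℝ) : ((min C 1 * l ^ n : ℝ≥0) : ℝ) ≤ deriv F^[n] x := by
    rcases n.eq_zero_or_pos with rfl | hn
    · simp
    calc ((min C 1 * l ^ n : ℝ≥0) : ℝ) ≤ C * l ^ n := by
          push_cast
          gcongr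
          exact min_le_left _ _
      _ ≤ |deriv F^[n] x| := hexp n hn x
      _ = deriv F^[n] x := abs_of_nonneg (hmono.iterate n).deriv_nonneg
  have hpos (n : ℕ) : 0 < min C 1 * l ^ n :=
    mul_pos (lt_min hC0 one_pos) (pow_pos (one_pos.trans hl1) n)
  refine ⟨(min C 1)⁻¹, l⁻¹, hsmooth, hdeg, fun x => ?_, inv_lt_one_of_one_lt₀ hl1, fun n => ?_⟩
  · exact (NNReal.coe_pos.2 (hpos 1)).trans_le (hderiv 1 x)
  · rw [inv_pow, ← mul_inv]
    exact antilipschitzWith_of_le_deriv (hpos n).ne' (hdiff.iterate n) (hderiv n)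

theorem AnalyticExpandingLift.expandingLift {F : ℝ → ℝ} {d : ℕ} (hF : AnalyticExpandingLift F d) :
    ExpandingLift 1 F :=
  let ⟨han, hdeg, _, _, _, hexp⟩ := hF
  ⟨contDiff_iff_contDiffAt.2 fun x => (han x).contDiffAt, ⟨d, by exact_mod_cast hdeg⟩, hexp⟩

namespace ContractingLift

variable {F : ℝ → ℝ} {d : ℕ} {K r L : ℝ≥0} {f : Circle1 → ℝ}

theorem differentiable (h : ContractingLift F d K r) : Differentiable ℝ F :=
  h.contDiff.differentiable one_ne_zero

theorem map_add_intCast (h : ContractingLift F d K r) (x : ℝ) (k : ℤ) :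
    F (x + k) = F x + k * d := by
  simpa using AddConstMapClass.map_add_int' (⟨F, h.map_add_one⟩ : AddConstMap ℝ ℝ 1 (d : ℝ)) x k

theorem iterate_add_intCast (h : ContractingLift F d K r) (n : ℕ) (x : ℝ) (k : ℤ) :
    F^[n] (x + k) = F^[n] x + k * d ^ n := by
  induction n with
  | zero => simp
  | succ n ih =>
    rw [Function.iterate_succ_apply', Function.iterate_succ_apply', ih, pow_succ, ← mul_assoc]
    exact_mod_cast h.map_add_intCast _ (k * d ^ n)

theorem dist_iterate_le (h : ContractingLift F d K r) {i n : ℕ} (hi : i ≤ n) (x y : ℝ) :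
    dist (F^[i] x) (F^[i] y) ≤ K * r ^ (n - i) * dist (F^[n] x) (F^[n] y) := by
  have := (h.antilipschitzWith_iterate (n - i)).le_mul_dist (F^[i] x) (F^[i] y)
  simpa [← Function.iterate_add_apply, Nat.sub_add_cancel hi] using this

theorem one_le_mul_pow (h : ContractingLift F d K r) (n : ℕ) : (1 : ℝ) ≤ K * (r * d) ^ n := by
  have hshift : F^[n] 1 = F^[n] 0 + d ^ n := by simpa using h.iterate_add_intCast n 0 1
  simpa [hshift, mul_pow, mul_assoc] using h.dist_iterate_le n.zero_le 1 0

theorem one_le_constant (h : ContractingLift F d K r) : 1 ≤ K := by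
  simpa using h.one_le_mul_pow 0

theorem two_le_degree (h : ContractingLift F d K r) : 2 ≤ d := by
  by_contra! hd
  have hd1 : (d : ℝ) ≤ 1 := by exact_mod_cast Nat.le_of_lt_succ hd
  have hrd : (r * d : ℝ) < 1 :=
    (mul_le_of_le_one_right r.2 hd1).trans_lt h.lt_one
  have hlim := (tendsto_pow_atTop_nhds_zero_of_lt_one (by positivity) hrd).const_mul (K : ℝ)
  exact absurd (ge_of_tendsto' hlim h.one_le_mul_pow) (by simp)

theorem surjective (h : ContractingLift F d K r) : Function.Surjective F := fun y => by
  obtain ⟨n, hn⟩ := exists_nat_ge |y - F 0|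
  have hd : (1 : ℝ) ≤ d := by exact_mod_cast one_le_two.trans h.two_le_degree
  have hnd : (n : ℝ) ≤ n * d := le_mul_of_one_le_right n.cast_nonneg hd
  have hpos := h.map_add_intCast 0 n
  have hneg := h.map_add_intCast 0 (-n)
  push_cast at hpos hneg
  exact mem_range_of_exists_le_of_exists_ge h.differentiable.continuous
    ⟨0 + -n, by linarith [neg_abs_le (y - F 0)]⟩ ⟨0 + n, by linarith [le_abs_self (y - F 0)]⟩

theorem cmap_coe (h : ContractingLift F d K r) (x : ℝ) : cmap F x = (F x : Circle1) := by
  have hrep : ((rep x : ℝ) : Circle1) = x := AddCircle.coe_equivIco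
  obtain ⟨k, hk⟩ := (AddCircle.coe_eq_zero_iff 1).1
    (show ((rep x - x : ℝ) : Circle1) = 0 by rw [AddCircle.coe_sub, hrep, sub_self])
  have hk' : rep x = x + k := by simpa using eq_add_of_sub_eq' hk.symm
  rw [cmap, hk', h.map_add_intCast, AddCircle.coe_add, add_eq_left, AddCircle.coe_eq_zero_iff]
  exact ⟨k * d, by simp⟩

theorem cmap_iterate_coe (h : ContractingLift F d K r) (n : ℕ) (x : ℝ) :
    (cmap F)^[n] x = (F^[n] x : Circle1) := by
  induction n with
  | zero => rfl
  | succ n ih => rw [Function.iterate_succ_apply', ih, h.cmap_coe, Function.iterate_succ_apply']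

theorem continuous_cmap (h : ContractingLift F d K r) : Continuous (cmap F) := by
  refine Circle1.continuous_of_comp_coe ?_
  simp_rw [h.cmap_coe]
  exact (AddCircle.continuous_mk' 1).comp h.differentiable.continuous

theorem dist_cmap_iterate_le (h : ContractingLift F d K r) {i n : ℕ} (hi : i ≤ n) (x y : ℝ) :
    dist ((cmap F)^[i] x) ((cmap F)^[i] y) ≤ K * r ^ (n - i) * dist (F^[n] x) (F^[n] y) := by
  rw [h.cmap_iterate_coe, h.cmap_iterate_coe]
  exact (Circle1.dist_coe_le _ _).trans (h.dist_iterate_le hi x y)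

theorem backwardContracting (h : ContractingLift F d K r) :
    BackwardContracting (cmap F) K r := by
  refine ⟨h.continuous_cmap, h.lt_one, fun n z w => ?_⟩
  induction z using QuotientAddGroup.induction_on with | H x => ?_
  induction w using QuotientAddGroup.induction_on with | H y => ?_
  obtain ⟨k, hk⟩ := Circle1.exists_dist_coe_eq (F^[n] x) y
  obtain ⟨x', hx'⟩ := h.surjective.iterate n (y + k)
  refine ⟨x', ?_, fun i hi => ?_⟩
  · rw [h.cmap_iterate_coe, hx']
    simp
  · rw [h.cmap_iterate_coe n x, show dist _ _ = _ from hk, ← hx']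
    exact h.dist_cmap_iterate_le hi x x'

theorem exists_periodic_shadow (h : ContractingLift F d K r) {n : ℕ} (hn : n ≠ 0) (z : Circle1) :
    ∃ p, (cmap F)^[n] p = p ∧
      ∀ i ≤ n, dist ((cmap F)^[i] z) ((cmap F)^[i] p) ≤ K * r ^ (n - i) * 2 := by
  induction z using QuotientAddGroup.induction_on with | H x => ?_
  have hd : (2 : ℝ) ≤ d ^ n := by
    exact_mod_cast h.two_le_degree.trans (Nat.le_self_pow hn d)
  have hshift : F^[n] (x + 1) = F^[n] x + d ^ n := by simpa using h.iterate_add_intCast n x 1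
  set k := ⌈F^[n] x - x⌉
  have hk : F^[n] x - x ≤ k := Int.le_ceil _
  have hk' : k < F^[n] x - x + 1 := Int.ceil_lt_add_one _
  obtain ⟨y, ⟨hxy, hyx⟩, hy : F^[n] y - y = k⟩ :=
    intermediate_value_Icc (f := fun y => F^[n] y - y) (by linarith : x ≤ x + 1)
      ((h.differentiable.continuous.iterate n).sub continuous_id).continuousOn
      ⟨hk, by linarith⟩
  refine ⟨y, ?_, fun i hi => (h.dist_cmap_iterate_le hi x y).trans ?_⟩
  · rw [h.cmap_iterate_coe, eq_add_of_sub_eq' hy]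
    simp
  · gcongr
    rw [Real.dist_eq, abs_le]
    constructor <;> linarith

theorem birkhoffSum_cmap_le (h : ContractingLift F d K r) (hf : LipschitzWith L f) (n : ℕ)
    (z : Circle1) :
    birkhoffSum (cmap F) f n z ≤ n * beta f (cmap F) + distortion L K r * 2 := by
  rcases eq_or_ne n 0 with rfl | hn
  · simp
  obtain ⟨p, hp, hclose⟩ := h.exists_periodic_shadow hn z
  have hdist := (abs_le.1 (dist_birkhoffSum_le_of_shadow hf h.lt_one zero_le_two hclose)).2
  linarith [birkhoffSum_le_mul_beta hf.continuous h.continuous_cmap.measurable hn hp]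

theorem hasBirkhoffBounds (h : ContractingLift F d K r) (hf : LipschitzWith L f) :
    HasBirkhoffBounds f (cmap F) (distortion L K r * 2) := by
  refine ⟨h.birkhoffSum_cmap_le hf, fun n x => ?_⟩
  obtain ⟨p, hp, -⟩ := h.exists_periodic_shadow one_ne_zero 0
  obtain ⟨z, hz⟩ := exists_mul_beta_le_birkhoffSum hf.continuous h.continuous_cmap
    ⟨_, invProb_orbitMeasure h.continuous_cmap.measurable one_ne_zero hp⟩ n
  obtain ⟨z', hz', hle⟩ := h.backwardContracting.exists_birkhoffSum_le hf n z x
  have hW := (distortion L K r).coe_nonneg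
  have := mul_le_mul_of_nonneg_left (Circle1.dist_le_one ((cmap F)^[n] z) x) hW
  exact ⟨z', hz', by linarith⟩

end ContractingLift

/-! ### Inverse branches -/

namespace ContractingLift

variable {F : ℝ → ℝ} {d : ℕ} {K r : ℝ≥0}

theorem map_tauIter_succ (h : ContractingLift F d K r) (j : ℕ → Fin d) (n : ℕ) (x : ℝ) :
    F (tauIter F j (n + 1) x) = tauIter F j n x + (j n : ℕ) :=
  Function.rightInverse_invFun h.surjective _

theorem exists_iterate_tauIter (h : ContractingLift F d K r) (j : ℕ → Fin d) (n : ℕ) :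
    ∃ k : ℤ, ∀ x, F^[n] (tauIter F j n x) = x + k := by
  induction n with
  | zero => exact ⟨0, fun x => by simp [tauIter]⟩
  | succ n ih =>
    obtain ⟨k, hk⟩ := ih
    refine ⟨k + (j n : ℕ) * d ^ n, fun x => ?_⟩
    rw [Function.iterate_succ_apply, h.map_tauIter_succ]
    simpa [hk, add_assoc] using h.iterate_add_intCast n (tauIter F j n x) (j n : ℕ)

theorem cmap_iterate_tauIter (h : ContractingLift F d K r) (j : ℕ → Fin d) (n : ℕ) (x : ℝ) :
    (cmap F)^[n] (tauIter F j n x) = x := by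
  obtain ⟨k, hk⟩ := h.exists_iterate_tauIter j n
  rw [h.cmap_iterate_coe, hk]
  simp

theorem lipschitzWith_tauIter (h : ContractingLift F d K r) (j : ℕ → Fin d) (n : ℕ) :
    LipschitzWith (K * r ^ n) (tauIter F j n) := by
  obtain ⟨k, hk⟩ := h.exists_iterate_tauIter j n
  refine LipschitzWith.of_dist_le_mul fun x y => ?_
  simpa [hk] using (h.antilipschitzWith_iterate n).le_mul_dist (tauIter F j n x) (tauIter F j n y)

theorem continuous_invFun (h : ContractingLift F d K r) : Continuous (Function.invFun F) :=
  ((h.antilipschitzWith_iterate 1).to_rightInverse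
    (Function.rightInverse_invFun h.surjective)).continuous

theorem differentiable_invFun (h : ContractingLift F d K r) :
    Differentiable ℝ (Function.invFun F) := fun _ =>
  (HasDerivAt.of_local_left_inverse h.continuous_invFun.continuousAt
    (h.differentiable _).hasDerivAt (h.deriv_pos _).ne'
    (Eventually.of_forall (Function.rightInverse_invFun h.surjective))).differentiableAt

theorem differentiable_tauIter (h : ContractingLift F d K r) (j : ℕ → Fin d) (n : ℕ) :
    Differentiable ℝ (tauIter F j n) := by
  induction n with
  | zero => exact differentiable_id
  | succ n ih => exact h.differentiable_invFun.comp (ih.add_const _)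

theorem abs_deriv_tauIter_le (h : ContractingLift F d K r) (j : ℕ → Fin d) (n : ℕ) (x : ℝ) :
    |deriv (tauIter F j n) x| ≤ K * r ^ n := by
  simpa using norm_deriv_le_of_lipschitz (x₀ := x) (h.lipschitzWith_tauIter j n)

theorem deriv_mul_deriv_tauIter_succ (h : ContractingLift F d K r) (j : ℕ → Fin d) (n : ℕ)
    (x : ℝ) :
    deriv F (tauIter F j (n + 1) x) * deriv (tauIter F j (n + 1)) x =
      deriv (tauIter F j n) x := by
  rw [← deriv_comp x (h.differentiable _) (h.differentiable_tauIter j (n + 1) x),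
    show F ∘ tauIter F j (n + 1) = fun y => tauIter F j n y + (j n : ℕ) from
      funext (h.map_tauIter_succ j n), deriv_add_const]

theorem continuous_tauIter_uncurry (h : ContractingLift F d K r) (n : ℕ) :
    Continuous fun w : ℝ × (ℕ → Fin d) => tauIter F w.2 n w.1 := by
  induction n with
  | zero => exact continuous_fst
  | succ n ih =>
    have hletter : Continuous fun w : ℝ × (ℕ → Fin d) => ((w.2 n : ℕ) : ℝ) :=
      (continuous_of_discreteTopology (f := fun a : Fin d => ((a : ℕ) : ℝ))).comp
        ((continuous_apply n).comp continuous_snd)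
    exact h.continuous_invFun.comp (ih.add hletter)

theorem first_letter_eq_of_coe_tauIter_one_eq (h : ContractingLift F d K r) {i j : ℕ → Fin d}
    {x : ℝ} (heq : (tauIter F j 1 x : Circle1) = tauIter F i 1 x) : j 0 = i 0 := by
  obtain ⟨k, hk⟩ := (AddCircle.coe_eq_zero_iff 1).1
    (show ((tauIter F j 1 x - tauIter F i 1 x : ℝ) : Circle1) = 0 by
      rw [AddCircle.coe_sub, heq, sub_self])
  have hshift : tauIter F j 1 x = tauIter F i 1 x + k := by
    simpa using eq_add_of_sub_eq' hk.symm
  have hF := h.map_add_intCast (tauIter F i 1 x) k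
  rw [← hshift, h.map_tauIter_succ, h.map_tauIter_succ] at hF
  simp only [tauIter, add_assoc, add_right_inj] at hF
  have hmod : ((j 0 : ℕ) : ℤ) ≡ (i 0 : ℕ) [ZMOD d] := by
    have hF' : ((j 0 : ℕ) : ℤ) = (i 0 : ℕ) + k * d := by exact_mod_cast hF
    simp [Int.ModEq, hF']
  exact Fin.ext ((Int.natCast_modEq_iff.1 hmod).eq_of_lt_of_lt (j 0).2 (i 0).2)

theorem coe_tauIter_ne (h : ContractingLift F d K r) {x : ℝ}
    (hx : ∀ n, 1 ≤ n → (cmap F)^[n] x ≠ x) {i j : ℕ → Fin d} {n : ℕ} (hij : n ≠ 0 ∨ j 0 ≠ i 0) :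
    (tauIter F j (n + 1) x : Circle1) ≠ tauIter F i 1 x := fun heq => by
  have hn : n = 0 := by
    by_contra hn
    refine hx n (Nat.one_le_iff_ne_zero.2 hn) ?_
    calc (cmap F)^[n] x = (cmap F)^[n + 1] (tauIter F i 1 x) := by
          rw [Function.iterate_add_apply, h.cmap_iterate_tauIter]
      _ = x := by rw [← heq, h.cmap_iterate_tauIter]
  subst hn
  exact hij.resolve_left (· rfl) (h.first_letter_eq_of_coe_tauIter_one_eq heq)

theorem exists_le_dist_tauIter (h : ContractingLift F d K r) {S : Set ℝ} (hS : IsCompact S)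
    (hper : ∀ x ∈ S, ∀ n, 1 ≤ n → (cmap F)^[n] x ≠ x) (i : Fin d) (n : ℕ) :
    ∃ ε > 0, ∀ x ∈ S, ∀ j : ℕ → Fin d, n ≠ 0 ∨ j 0 ≠ i →
      ε ≤ dist (tauIter F j (n + 1) x : Circle1) (tauIter F (fun _ => i) 1 x) := by
  have hclosed : IsClosed {j : ℕ → Fin d | n ≠ 0 ∨ j 0 ≠ i} :=
    (isClosed_discrete {a : Fin d | n ≠ 0 ∨ a ≠ i}).preimage
      (continuous_apply (A := fun _ : ℕ => Fin d) 0)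
  have hcont : Continuous fun w : ℝ × (ℕ → Fin d) =>
      dist (tauIter F w.2 (n + 1) w.1 : Circle1) (tauIter F (fun _ => i) 1 w.1) :=
    ((AddCircle.continuous_mk' 1).comp (h.continuous_tauIter_uncurry (n + 1))).dist
      ((AddCircle.continuous_mk' 1).comp
        ((h.lipschitzWith_tauIter _ 1).continuous.comp continuous_fst))
  obtain ⟨ε, hε, hle⟩ := (hS.prod hclosed.isCompact).exists_forall_le' hcont.continuousOn
    (a := 0) fun w hw => dist_pos.2 (h.coe_tauIter_ne (hper w.1 hw.1) hw.2)
  exact ⟨ε, hε, fun x hx j hj => hle (x, j) ⟨hx, hj⟩⟩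

theorem exists_forall_lt_le_dist_tauIter (h : ContractingLift F d K r) {S : Set ℝ}
    (hS : IsCompact S) (hper : ∀ x ∈ S, ∀ n, 1 ≤ n → (cmap F)^[n] x ≠ x) (N : ℕ) :
    ∃ ε > 0, ∀ i : Fin d, ∀ n < N, ∀ x ∈ S, ∀ j : ℕ → Fin d, n ≠ 0 ∨ j 0 ≠ i →
      ε ≤ dist (tauIter F j (n + 1) x : Circle1) (tauIter F (fun _ => i) 1 x) := by
  choose ε hε hle using h.exists_le_dist_tauIter hS hper
  obtain ⟨ε₀, hε₀, hmin⟩ :=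
    (finite_univ (α := Fin d × Fin N)).isCompact.exists_forall_le'
      (f := fun p => ε p.1 p.2) continuous_of_discreteTopology.continuousOn
      (a := 0) fun p _ => hε p.1 p.2
  exact ⟨ε₀, hε₀, fun i n hn x hx j hj =>
    (hmin (i, ⟨n, hn⟩) (mem_univ _)).trans (hle i n x hx j hj)⟩

end ContractingLift

/-! ### Perturbations concentrated near a point -/

/-- A continuous cut-off function on the circle: `1` within distance `ε` of `y`, `0` from
distance `2ε` on. -/
structure IsPlateau (t : Circle1 → ℝ) (y : Circle1) (ε : ℝ) : Prop where
  continuous : Continuous t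
  mem_Icc : ∀ z, t z ∈ Icc 0 1
  eq_one : ∀ z, dist z y ≤ ε → t z = 1
  eq_zero : ∀ z, 2 * ε ≤ dist z y → t z = 0

theorem exists_isPlateau (y : Circle1) {ε : ℝ} (hε : 0 < ε) : ∃ t, IsPlateau t y ε := by
  obtain ⟨t, hzero, hone, hmem⟩ := exists_continuous_zero_one_of_isClosed
    (Metric.isOpen_ball (x := y) (ε := 2 * ε)).isClosed_compl
    (Metric.isClosed_closedBall (x := y) (ε := ε))
    (disjoint_compl_left_iff_subset.2 (Metric.closedBall_subset_ball (by linarith)))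
  exact ⟨t, t.continuous, hmem, fun z hz => hone hz, fun z hz => hzero (by simpa using hz)⟩

theorem IsPlateau.intervalIntegral_le {t : Circle1 → ℝ} {y : Circle1} {ε : ℝ}
    (ht : IsPlateau t y ε) (hε : 0 ≤ ε) : ∫ x in (0 : ℝ)..1, t x ≤ 4 * ε := by
  have hball : MeasurableSet (Metric.closedBall y (2 * ε)) :=
    Metric.isClosed_closedBall.measurableSet
  have hcircle := AddCircle.intervalIntegral_preimage 1 0 t
  rw [zero_add] at hcircle
  calc ∫ x in (0 : ℝ)..1, t x = ∫ z, t z := hcircle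
    _ ≤ ∫ z, (Metric.closedBall y (2 * ε)).indicator 1 z := by
        refine integral_mono_of_nonneg (Eventually.of_forall fun z => (ht.mem_Icc z).1)
          ((integrable_const (1 : ℝ)).indicator hball) (Eventually.of_forall fun z => ?_)
        by_cases hz : z ∈ Metric.closedBall y (2 * ε)
        · simpa [indicator_of_mem hz] using (ht.mem_Icc z).2
        · have hfar : 2 * ε ≤ dist z y := (not_le.1 hz).le
          simp [indicator_of_notMem hz, ht.eq_zero z hfar]
    _ = volume.real (Metric.closedBall y (2 * ε)) := integral_indicator_one hball
    _ ≤ 4 * ε := by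
        rw [measureReal_def, AddCircle.volume_closedBall, ENNReal.toReal_ofReal (by positivity)]
        exact (min_le_right _ _).trans (by linarith)

theorem CrFun.exists_deriv_eq_sub_integral {ψ : ℝ → ℝ} (hψ : Continuous ψ)
    (hper : Function.Periodic ψ 1) :
    ∃ φ : CrFun 1, ∀ x, deriv (fun x : ℝ => φ.1 x) x = ψ x - ∫ t in (0 : ℝ)..1, ψ t := by
  set m := ∫ t in (0 : ℝ)..1, ψ t with hm
  have hc : Continuous fun x => ψ x - m := hψ.sub continuous_const
  set Φ : ℝ → ℝ := fun x => ∫ t in (0 : ℝ)..x, (ψ t - m)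
  have hΦ : ∀ x, HasDerivAt Φ (ψ x - m) x := fun x => hc.integral_hasStrictDerivAt 0 x |>.hasDerivAt
  have hmean : ∫ t in (0 : ℝ)..1, (ψ t - m) = 0 := by
    rw [intervalIntegral.integral_sub (hψ.intervalIntegrable _ _) intervalIntegrable_const]
    simp [← hm]
  have hΦper : Function.Periodic Φ 1 := fun x => by
    have hsplit := intervalIntegral.integral_add_adjacent_intervals
      (hc.intervalIntegrable (μ := volume) 0 x) (hc.intervalIntegrable x (x + 1))
    have hshift : ∫ t in x..x + 1, (ψ t - m) = 0 := by
      rw [Function.Periodic.intervalIntegral_add_eq (fun t => by rw [hper t]) x 0, zero_add, hmean]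
    simp only [Φ, ← hsplit, hshift, add_zero]
  have hderiv : deriv Φ = fun x => ψ x - m := funext fun x => (hΦ x).deriv
  have hΦsmooth : ContDiff ℝ 1 Φ :=
    contDiff_one_iff_deriv.2 ⟨fun x => (hΦ x).differentiableAt, hderiv ▸ hc⟩
  exact ⟨⟨hΦper.lift, hΦsmooth⟩, fun x => congrFun hderiv x⟩

theorem CrFun.exists_mem_abs_deriv_sub_lt {D : Set (CrFun 1)} (hD : Dense D) (φ : CrFun 1)
    {η : ℝ} (hη : 0 < η) :
    ∃ g ∈ D, ∀ x, |deriv (fun x : ℝ => g.1 x) x - deriv (fun x : ℝ => φ.1 x) x| < η := by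
  let e : CrFun 1 → (ℝ →ᵤ ℝ) := fun g => crSeq 1 (fun x : ℝ => g.1 x) 1
  have hcrSeq : Continuous fun g : CrFun 1 => crSeq 1 fun x : ℝ => g.1 x := continuous_induced_dom
  have he : Continuous e := (continuous_apply 1).comp hcrSeq
  have hnhds := (UniformFun.hasBasis_nhds ℝ ℝ (e φ)).mem_of_mem
    (i := {p : ℝ × ℝ | dist p.1 p.2 < η}) (Metric.dist_mem_uniformity hη)
  obtain ⟨g, hgD, hg⟩ := hD.inter_nhds_nonempty (he.continuousAt.preimage_mem_nhds hnhds)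
  have he_apply : ∀ g x, UniformFun.toFun (e g) x = deriv (fun x : ℝ => g.1 x) x := fun g x => by
    simp [e, crSeq, iteratedDeriv_one]
  refine ⟨g, hgD, fun x => ?_⟩
  have hx : dist (UniformFun.toFun (e φ) x) (UniformFun.toFun (e g) x) < η := hg x
  rwa [he_apply, he_apply, dist_comm, Real.dist_eq] at hx

theorem CrFun.exists_mem_abs_deriv_sub_le {D : Set (CrFun 1)} (hD : Dense D) {ψ : ℝ → ℝ}
    (hψ : Continuous ψ) (hper : Function.Periodic ψ 1) {κ : ℝ}
    (hκ : |∫ t in (0 : ℝ)..1, ψ t| < κ) :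
    ∃ φ ∈ D, ∀ x, |deriv (fun x : ℝ => φ.1 x) x - ψ x| ≤ κ := by
  obtain ⟨φ₀, hφ₀⟩ := CrFun.exists_deriv_eq_sub_integral hψ hper
  obtain ⟨φ, hφD, hφ⟩ := CrFun.exists_mem_abs_deriv_sub_lt hD φ₀ (sub_pos.2 hκ)
  refine ⟨φ, hφD, fun x => ?_⟩
  have hx := hφ x
  rw [hφ₀, ← sub_add] at hx
  have := abs_sub (deriv (fun x : ℝ => φ.1 x) x - ψ x + ∫ t in (0 : ℝ)..1, ψ t)
    (∫ t in (0 : ℝ)..1, ψ t)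
  rw [add_sub_cancel_right] at this
  linarith

/-! ### Derivatives of the functions `h^φ_j` -/

namespace ContractingLift

variable {F : ℝ → ℝ} {d : ℕ} {K r : ℝ≥0}

theorem exists_abs_deriv_le (h : ContractingLift F d K r) : ∃ M : ℝ≥0, ∀ x, |deriv F x| ≤ M :=
  exists_abs_deriv_le_of_map_add_one h.contDiff h.map_add_one

theorem exists_mem_abs_deriv_sub_le (h : ContractingLift F d K r) {D : Set (CrFun 1)}
    (hD : Dense D) {M : ℝ≥0} (hM : ∀ x, |deriv F x| ≤ M) {t : Circle1 → ℝ} {y : Circle1}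
    {ε κ : ℝ} (ht : IsPlateau t y ε) (hε : 0 ≤ ε) (hκ : M * (4 * ε) < κ) :
    ∃ φ ∈ D, ∀ x, |deriv (fun x : ℝ => φ.1 x) x - deriv F x * t x| ≤ κ := by
  have htc : Continuous fun x : ℝ => t x := ht.continuous.comp (AddCircle.continuous_mk' 1)
  have hψ : Continuous fun x => deriv F x * t x := (h.contDiff.continuous_deriv_one).mul htc
  refine CrFun.exists_mem_abs_deriv_sub_le hD hψ (fun x => ?_) (lt_of_le_of_lt ?_ hκ)
  · simp [deriv_periodic_of_map_add h.map_add_one x]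
  have ht0 (x : ℝ) : 0 ≤ t x := (ht.mem_Icc x).1
  rw [abs_of_nonneg (intervalIntegral.integral_nonneg zero_le_one fun x _ =>
    mul_nonneg (h.deriv_pos x).le (ht0 x))]
  calc ∫ x in (0 : ℝ)..1, deriv F x * t x ≤ ∫ x in (0 : ℝ)..1, M * t x :=
        intervalIntegral.integral_mono_on zero_le_one (hψ.intervalIntegrable _ _)
          ((continuous_const.mul htc).intervalIntegrable _ _) fun x _ =>
            mul_le_mul_of_nonneg_right ((le_abs_self _).trans (hM x)) (ht0 x)
    _ = M * ∫ x in (0 : ℝ)..1, t x := intervalIntegral.integral_const_mul _ _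
    _ ≤ M * (4 * ε) := by gcongr; exact ht.intervalIntegral_le hε

section

variable {φ : Circle1 → ℝ}

theorem hasDerivAt_comp_tauIter_sub (h : ContractingLift F d K r)
    (hφ : Differentiable ℝ fun x : ℝ => φ x) (j : ℕ → Fin d) (n : ℕ) (x c : ℝ) :
    HasDerivAt (fun x => φ (tauIter F j n x) - c)
      (deriv (fun x : ℝ => φ x) (tauIter F j n x) * deriv (tauIter F j n) x) x :=
  ((hφ _).hasDerivAt.comp x (h.differentiable_tauIter j n x).hasDerivAt).sub_const c

theorem deriv_hSumFin (h : ContractingLift F d K r) (hφ : Differentiable ℝ fun x : ℝ => φ x)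
    (j : ℕ → Fin d) (m : ℕ) (x : ℝ) :
    deriv (hSumFin F j m φ) x = ∑ n ∈ Finset.range m,
      deriv (fun x : ℝ => φ x) (tauIter F j (n + 1) x) * deriv (tauIter F j (n + 1)) x :=
  (HasDerivAt.fun_sum fun n _ => h.hasDerivAt_comp_tauIter_sub hφ j (n + 1) x _).deriv

theorem summable_geometric_succ (h : ContractingLift F d K r) :
    Summable fun n : ℕ => (K * r ^ (n + 1) : ℝ) :=
  ((summable_nat_add_iff 1).2 (summable_geometric_of_lt_one r.coe_nonneg h.lt_one)).mul_left _

theorem tendsto_deriv_hSumFin (h : ContractingLift F d K r)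
    (hφ : ContDiff ℝ 1 fun x : ℝ => φ x) (j : ℕ → Fin d) (x : ℝ) :
    Tendsto (fun m => deriv (hSumFin F j m φ) x) atTop (𝓝 (deriv (hSum F j φ) x)) := by
  have hdiff := hφ.differentiable one_ne_zero
  obtain ⟨B, hB⟩ := exists_abs_deriv_le_of_map_add_one (b := 0) hφ (by simp)
  have hterm (n : ℕ) (y : ℝ) := h.hasDerivAt_comp_tauIter_sub hdiff j (n + 1) y
    (φ (tauIter F j (n + 1) 0))
  have hbound (n : ℕ) (y : ℝ) : ‖deriv (fun x : ℝ => φ x) (tauIter F j (n + 1) y) *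
      deriv (tauIter F j (n + 1)) y‖ ≤ B * (K * r ^ (n + 1)) := by
    rw [norm_mul]
    exact mul_le_mul (hB _) (h.abs_deriv_tauIter_le j _ _) (norm_nonneg _) B.coe_nonneg
  have hsum := h.summable_geometric_succ.mul_left (B : ℝ)
  have hderiv : HasDerivAt (hSum F j φ) _ x :=
    hasDerivAt_tsum hsum hterm hbound (y₀ := 0) (by simp) x
  simp_rw [h.deriv_hSumFin hdiff, hderiv.deriv]
  exact (Summable.of_norm_bounded hsum fun n => hbound n x).hasSum.tendsto_sum_nat

theorem sum_Ico_geometric_le (h : ContractingLift F d K r) (N m : ℕ) :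
    ∑ n ∈ Finset.Ico N m, (K * r ^ n : ℝ) ≤ K * (r ^ N / (1 - r)) := by
  rw [← Finset.mul_sum]
  exact mul_le_mul_of_nonneg_left
    (geom_sum_Ico_le_of_lt_one r.coe_nonneg h.lt_one) K.coe_nonneg

theorem abs_deriv_hSumFin_sub_sum_le (h : ContractingLift F d K r)
    (hφ : Differentiable ℝ fun x : ℝ => φ x) {t : Circle1 → ℝ} {κ : ℝ}
    (happrox : ∀ x : ℝ, |deriv (fun x : ℝ => φ x) x - deriv F x * t x| ≤ κ) (j : ℕ → Fin d)
    (m : ℕ) (x : ℝ) :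
    |deriv (hSumFin F j m φ) x -
        ∑ n ∈ Finset.range m, t (tauIter F j (n + 1) x) * deriv (tauIter F j n) x| ≤
      κ * (K / (1 - r)) := by
  have hκ : 0 ≤ κ := (abs_nonneg _).trans (happrox 0)
  rw [h.deriv_hSumFin hφ, ← Finset.sum_sub_distrib]
  calc |∑ n ∈ Finset.range m,
          (deriv (fun x : ℝ => φ x) (tauIter F j (n + 1) x) * deriv (tauIter F j (n + 1)) x -
            t (tauIter F j (n + 1) x) * deriv (tauIter F j n) x)|
      ≤ ∑ n ∈ Finset.range m, κ * (K * r ^ n) := by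
        refine (Finset.abs_sum_le_sum_abs _ _).trans (Finset.sum_le_sum fun n _ => ?_)
        rw [← h.deriv_mul_deriv_tauIter_succ j n x, ← mul_assoc, mul_comm (t _), ← sub_mul,
          abs_mul]
        refine mul_le_mul (happrox _) ((h.abs_deriv_tauIter_le j _ x).trans ?_) (abs_nonneg _) hκ
        exact mul_le_mul_of_nonneg_left
          (pow_le_pow_of_le_one r.coe_nonneg h.lt_one.le n.le_succ) K.coe_nonneg
    _ ≤ κ * (K / (1 - r)) := by
        rw [← Finset.mul_sum, Finset.range_eq_Ico]
        gcongr
        simpa [div_eq_mul_inv] using h.sum_Ico_geometric_le 0 m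

end

theorem abs_sum_mul_deriv_tauIter_sub_le (h : ContractingLift F d K r) {t : Circle1 → ℝ}
    (ht : ∀ z, t z ∈ Icc 0 1) {j : ℕ → Fin d} {x : ℝ} {N m : ℕ} (hN : 1 ≤ N) (hm : 1 ≤ m)
    (hzero : ∀ n, n ≠ 0 → n < N → t (tauIter F j (n + 1) x) = 0) :
    |∑ n ∈ Finset.range m, t (tauIter F j (n + 1) x) * deriv (tauIter F j n) x -
        t (tauIter F j 1 x)| ≤ K * (r ^ N / (1 - r)) := by
  have hfirst : deriv (tauIter F j 0) x = 1 := deriv_id x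
  have htail : ∑ n ∈ Finset.Ico N m, t (tauIter F j (n + 1) x) * deriv (tauIter F j n) x =
      ∑ n ∈ Finset.Ico 1 m, t (tauIter F j (n + 1) x) * deriv (tauIter F j n) x := by
    refine Finset.sum_subset (Finset.Ico_subset_Ico_left hN) fun n hn hnN => ?_
    rw [Finset.mem_Ico] at hn hnN
    rw [hzero n (by omega) (by omega), zero_mul]
  rw [Finset.sum_range_eq_add_Ico _ hm, hfirst, mul_one, add_sub_cancel_left, ← htail]
  refine (Finset.abs_sum_le_sum_abs _ _).trans
    ((Finset.sum_le_sum fun n _ => ?_).trans (h.sum_Ico_geometric_le N m))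
  rw [abs_mul, abs_of_nonneg (ht _).1]
  exact (mul_le_of_le_one_left (abs_nonneg _) (ht _).2).trans (h.abs_deriv_tauIter_le j n x)

end ContractingLift

/-! ### Transversality -/

namespace ContractingLift

variable {F : ℝ → ℝ} {d : ℕ} {K r : ℝ≥0} {x x₀ ε : ℝ}

theorem dist_coe_tauIter_succ_le (h : ContractingLift F d K r) (j : ℕ → Fin d) (n : ℕ)
    (hx : K * |x - x₀| ≤ ε) :
    dist (tauIter F j (n + 1) x : Circle1) (tauIter F j (n + 1) x₀) ≤ ε := by
  refine (Circle1.dist_coe_le _ _).trans (((h.lipschitzWith_tauIter j _).dist_le_mul x x₀).trans ?_)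
  calc ((K * r ^ (n + 1) : ℝ≥0) : ℝ) * dist x x₀ ≤ (K * 1) * |x - x₀| := by
        push_cast
        rw [Real.dist_eq]
        gcongr
        exact pow_le_one₀ r.coe_nonneg h.lt_one.le
    _ ≤ ε := by rwa [mul_one]

theorem plateau_tauIter_eq_zero (h : ContractingLift F d K r) {i : Fin d} {j : ℕ → Fin d} {n : ℕ}
    {t : Circle1 → ℝ} (ht : IsPlateau t (tauIter F (fun _ => i) 1 x₀) ε)
    (hsep : 3 * ε ≤ dist (tauIter F j (n + 1) x₀ : Circle1) (tauIter F (fun _ => i) 1 x₀))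
    (hx : K * |x - x₀| ≤ ε) : t (tauIter F j (n + 1) x) = 0 := by
  refine ht.eq_zero _ ?_
  have htri := dist_triangle_left (tauIter F j (n + 1) x₀ : Circle1)
    (tauIter F (fun _ => i) 1 x₀) (tauIter F j (n + 1) x)
  linarith [h.dist_coe_tauIter_succ_le j n hx]

theorem plateau_tauIter_one (h : ContractingLift F d K r) {i : Fin d} {j : ℕ → Fin d}
    {t : Circle1 → ℝ} (ht : IsPlateau t (tauIter F (fun _ => i) 1 x₀) ε)
    (hsep : j 0 ≠ i →
      3 * ε ≤ dist (tauIter F j 1 x₀ : Circle1) (tauIter F (fun _ => i) 1 x₀))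
    (hx : K * |x - x₀| ≤ ε) : t (tauIter F j 1 x) = if j 0 = i then 1 else 0 := by
  split_ifs with hj
  · refine ht.eq_one _ ?_
    have hbranch : tauIter F j 1 x₀ = tauIter F (fun _ => i) 1 x₀ := by simp only [tauIter, hj]
    exact hbranch ▸ h.dist_coe_tauIter_succ_le j 0 hx
  · exact h.plateau_tauIter_eq_zero ht (hsep hj) hx

theorem exists_mul_geometric_tail_le (h : ContractingLift F d K r) {θ : ℝ} (hθ : 0 < θ) :
    ∃ N, 1 ≤ N ∧ K * (r ^ N / (1 - r)) ≤ θ := by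
  have hlim : Tendsto (fun N : ℕ => (K * (r ^ N / (1 - r)) : ℝ)) atTop (𝓝 0) := by
    simpa using ((tendsto_pow_atTop_nhds_zero_of_lt_one r.coe_nonneg h.lt_one).div_const
      (1 - (r : ℝ))).const_mul (K : ℝ)
  exact ((eventually_ge_atTop 1).and (hlim.eventually (ge_mem_nhds hθ))).exists

theorem exists_mem_abs_deriv_hSumFin_sub_le (h : ContractingLift F d K r) {D : Set (CrFun 1)}
    (hD : Dense D) {M : ℝ≥0} (hM : ∀ x, |deriv F x| ≤ M) {κ : ℝ} (hε : 0 < ε)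
    (hMε : M * (4 * ε) < κ) {N : ℕ} (hN : 1 ≤ N) {i : Fin d}
    (hsep : ∀ n < N, ∀ j : ℕ → Fin d, n ≠ 0 ∨ j 0 ≠ i →
      3 * ε ≤ dist (tauIter F j (n + 1) x₀ : Circle1) (tauIter F (fun _ => i) 1 x₀)) :
    ∃ φ ∈ D, ∀ x, K * |x - x₀| ≤ ε → ∀ (j : ℕ → Fin d) (m : ℕ), 1 ≤ m →
      |deriv (hSumFin F j m φ.1) x - if j 0 = i then 1 else 0| ≤
        κ * (K / (1 - r)) + K * (r ^ N / (1 - r)) := by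
  obtain ⟨t, ht⟩ := exists_isPlateau (tauIter F (fun _ => i) 1 x₀ : Circle1) hε
  obtain ⟨φ, hφD, hφ⟩ := h.exists_mem_abs_deriv_sub_le hD hM ht hε.le hMε
  refine ⟨φ, hφD, fun x hx j m hm => ?_⟩
  have herror := h.abs_deriv_hSumFin_sub_sum_le (φ.2.differentiable one_ne_zero) hφ j m x
  have hmain := h.abs_sum_mul_deriv_tauIter_sub_le ht.mem_Icc hN hm fun n hn hnN =>
    h.plateau_tauIter_eq_zero ht (hsep n hnN j (Or.inl hn)) hx
  rw [h.plateau_tauIter_one ht (fun hj => hsep 0 hN j (Or.inr hj)) hx] at hmain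
  exact (abs_sub_le _ _ _).trans (add_le_add herror hmain)

theorem exists_transversal_hSumFin (h : ContractingLift F d K r) {D : Set (CrFun 1)}
    (hD : Dense D) {S : Set ℝ} (hS : IsCompact S)
    (hper : ∀ x ∈ S, ∀ n, 1 ≤ n → (cmap F)^[n] x ≠ x) {θ : ℝ} (hθ : 0 < θ) :
    ∃ δ > 0, ∀ (i : Fin d), ∀ x₀ ∈ S, ∃ φ ∈ D, ∀ x, |x - x₀| ≤ 2 * δ →
      ∀ (j : ℕ → Fin d) (m : ℕ), 1 ≤ m →
        |deriv (hSumFin F j m φ.1) x - if j 0 = i then 1 else 0| ≤ θ := by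
  have hK : (0 : ℝ) < K := zero_lt_one.trans_le h.one_le_constant
  obtain ⟨M, hM⟩ := h.exists_abs_deriv_le
  obtain ⟨N, hN, htail⟩ := h.exists_mul_geometric_tail_le (half_pos hθ)
  obtain ⟨ε₀, hε₀, hsep⟩ := h.exists_forall_lt_le_dist_tauIter hS hper N
  obtain ⟨κ, hκ, hκθ⟩ := exists_pos_mul_lt (half_pos hθ) (K / (1 - r))
  obtain ⟨ε₁, hε₁, hMε₁⟩ := exists_pos_mul_lt hκ (M * 4)
  set ε := min ε₁ (ε₀ / 3)
  have hε : 0 < ε := lt_min hε₁ (by positivity)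
  have hε_sep : 3 * ε ≤ ε₀ := by linarith [min_le_right ε₁ (ε₀ / 3)]
  have hMε : M * (4 * ε) < κ := by
    rw [← mul_assoc]
    exact (mul_le_mul_of_nonneg_left (min_le_left _ _) (by positivity)).trans_lt hMε₁
  refine ⟨ε / (2 * K), by positivity, fun i x₀ hx₀ => ?_⟩
  obtain ⟨φ, hφD, hφ⟩ := h.exists_mem_abs_deriv_hSumFin_sub_le hD hM hε hMε hN
    fun n hn j hj => hε_sep.trans (hsep i n hn x₀ hx₀ j hj)
  refine ⟨φ, hφD, fun x hx j m hm => (hφ x ?_ j m hm).trans (by linarith)⟩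
  calc K * |x - x₀| ≤ K * (2 * (ε / (2 * K))) := by gcongr
    _ = ε := by field_simp

theorem abs_deriv_hSum_sub_le (h : ContractingLift F d K r) {φ : Circle1 → ℝ}
    (hφ : ContDiff ℝ 1 fun x : ℝ => φ x) {j : ℕ → Fin d} {c θ : ℝ}
    (hfin : ∀ m, 1 ≤ m → |deriv (hSumFin F j m φ) x - c| ≤ θ) :
    |deriv (hSum F j φ) x - c| ≤ θ :=
  le_of_tendsto ((h.tendsto_deriv_hSumFin hφ j x).sub_const c).abs
    (eventually_atTop.2 ⟨1, hfin⟩)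

end ContractingLift

theorem exists_fin_cover_Ioo_of_isCompact {S : Set ℝ} (hS : IsCompact S) (hne : S.Nonempty) {δ : ℝ}
    (hδ : 0 < δ) :
    ∃ Q : ℕ, 0 < Q ∧ ∃ xs : Fin Q → ℝ, (∀ q, xs q ∈ S) ∧
      S ⊆ ⋃ q, Ioo (xs q - δ) (xs q + δ) := by
  obtain ⟨s, hsS, hs, hcov⟩ := hS.finite_cover_balls hδ
  obtain ⟨Q, xs, -, rfl⟩ := hs.fin_param
  simp only [biUnion_range, Real.ball_eq_Ioo] at hcov
  obtain ⟨q, -⟩ := mem_iUnion.1 (hcov hne.some_mem)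
  exact ⟨Q, q.pos, xs, fun q => hsS (mem_range_self q), hcov⟩

theorem Circle1.nonempty_Icc_inter_preimage_coe {A : Set Circle1} (hA : A.Nonempty) :
    {x : ℝ | x ∈ Icc (0 : ℝ) 1 ∧ (x : Circle1) ∈ A}.Nonempty := by
  obtain ⟨z, hz⟩ := hA
  obtain ⟨x, hx, rfl⟩ : z ∈ ((↑) : ℝ → Circle1) '' Icc 0 (0 + 1) := by
    rw [AddCircle.coe_image_Icc_eq]
    trivial
  exact ⟨x, by simpa using hx, hz⟩

theorem abs_sub_ite_one_zero_le_iff {p : Prop} [Decidable p] {a θ : ℝ} :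
    |a - if p then 1 else 0| ≤ θ ↔ (p → |a - 1| ≤ θ) ∧ (¬p → |a| ≤ θ) := by
  split_ifs with hp <;> simp [hp]

theorem transversal_family_general (F : ℝ → ℝ) (d : ℕ) (hF : ExpandingLift 1 F)
    (hmono : Monotone F) (hdeg : ∀ x, F (x + 1) = F x + d) (D : Set (CrFun 1)) (hD : Dense D)
    {L : ℝ≥0} {f : Circle1 → ℝ} (hf : LipschitzWith L f)
    (hper : ∀ x ∈ Kset f (cmap F), ∀ n : ℕ, 1 ≤ n → (cmap F)^[n] x ≠ x) {θ : ℝ} (hθ : 0 < θ) :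
    ∃ δ > (0 : ℝ), ∃ Q : ℕ, 0 < Q ∧ ∃ xs : Fin Q → ℝ,
      (∀ q, xs q ∈ Icc (0 : ℝ) 1 ∧ (xs q : Circle1) ∈ Kset f (cmap F)) ∧
      ∃ φ : Fin d → Fin Q → CrFun 1, (∀ i q, φ i q ∈ D) ∧
        ({x : ℝ | x ∈ Icc (0 : ℝ) 1 ∧ (x : Circle1) ∈ Kset f (cmap F)} ⊆
          ⋃ q, Ioo (xs q - δ) (xs q + δ)) ∧
        ∀ (x : ℝ) (q : Fin Q), |x - xs q| ≤ 2 * δ →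
          ∀ (i : Fin d) (j : ℕ → Fin d),
            ((j 0 = i → |deriv (hSum F j (φ i q).1) x - 1| ≤ θ) ∧
              (j 0 ≠ i → |deriv (hSum F j (φ i q).1) x| ≤ θ)) ∧
            ∀ m : ℕ, 1 ≤ m →
              ((j 0 = i → |deriv (hSumFin F j m (φ i q).1) x - 1| ≤ θ) ∧
                (j 0 ≠ i → |deriv (hSumFin F j m (φ i q).1) x| ≤ θ)) := by
  obtain ⟨K, r, h⟩ := hF.exists_contractingLift hmono hdeg
  have hK : IsClosed (Kset f (cmap F)) := (isCompact_Kset h.backwardContracting hf).isClosed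
  have hS : IsCompact {x : ℝ | x ∈ Icc (0 : ℝ) 1 ∧ (x : Circle1) ∈ Kset f (cmap F)} :=
    isCompact_Icc.inter_right (hK.preimage (AddCircle.continuous_mk' 1))
  have hS_ne := Circle1.nonempty_Icc_inter_preimage_coe
    ((h.hasBirkhoffBounds hf).nonempty_Kset h.backwardContracting hf)
  obtain ⟨δ, hδ, hlocal⟩ := h.exists_transversal_hSumFin hD hS (fun x hx => hper x hx.2) hθ
  obtain ⟨Q, hQ, xs, hxs, hcov⟩ := exists_fin_cover_Ioo_of_isCompact hS hS_ne hδ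
  choose φ hφD hφ using fun i q => hlocal i (xs q) (hxs q)
  refine ⟨δ, hδ, Q, hQ, xs, hxs, φ, hφD, hcov, fun x q hx i j => ?_⟩
  have hfin := hφ i q x hx j
  have hsum := h.abs_deriv_hSum_sub_le (φ i q).2 hfin
  simp only [abs_sub_ite_one_zero_le_iff] at hfin hsum
  exact ⟨hsum, hfin⟩

/-- Lemma 4.4: construction of the transversal perturbations `φ_{i,q} ∈ 𝓓`. -/
theorem transversal_family (F : ℝ → ℝ) (d : ℕ) (hF : AnalyticExpandingLift F d)
    (D : Set (CrFun 1)) (hDdense : Dense D)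
    (hD2 : ∀ g ∈ D, ContDiff ℝ 2 fun x : ℝ => g.1 ↑x)
    (f0 : CrFun 2)
    (hper : ∀ x ∈ Kset f0.1 (cmap F), ∀ n : ℕ, 1 ≤ n → (cmap F)^[n] x ≠ x) :
    ∃ δ > (0 : ℝ), ∃ Q : ℕ, 0 < Q ∧ ∃ xs : Fin Q → ℝ,
      (∀ q, xs q ∈ Set.Icc (0 : ℝ) 1 ∧ ((xs q : ℝ) : Circle1) ∈ Kset f0.1 (cmap F)) ∧
      ∃ φ : Fin d → Fin Q → CrFun 1, (∀ i q, φ i q ∈ D) ∧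
        ({x : ℝ | x ∈ Set.Icc (0 : ℝ) 1 ∧ ((x : ℝ) : Circle1) ∈ Kset f0.1 (cmap F)} ⊆
          ⋃ q, Set.Ioo (xs q - δ) (xs q + δ)) ∧
        ∀ (x : ℝ) (q : Fin Q), |x - xs q| ≤ 2 * δ →
          ∀ (i : Fin d) (j : ℕ → Fin d),
            ((j 0 = i → |deriv (hSum F j (φ i q).1) x - 1| ≤ 1 / 3) ∧
              (j 0 ≠ i → |deriv (hSum F j (φ i q).1) x| ≤ 1 / 3)) ∧
            ∀ m : ℕ, 1 ≤ m →
              ((j 0 = i → |deriv (hSumFin F j m (φ i q).1) x - 1| ≤ 1 / 3) ∧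
                (j 0 ≠ i → |deriv (hSumFin F j m (φ i q).1) x| ≤ 1 / 3)) := by
  obtain ⟨L, hf⟩ := f0.exists_lipschitzWith one_le_two
  exact transversal_family_general F d hF.expandingLift hF.2.2.1.monotone hF.2.1 D hDdense hf hper
    (by norm_num)
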